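/- arXiv:2206.12860 — 2 statements merged into one kernel-verified Lean document; each statement's English description precedes it below -/
import Mathlib

section
/- The Mordell–Weil group X₀(15)(ℚ) of ℚ-rational points of the elliptic curve X₀(15) is isomorphic, as an abelian group, to (ℤ/2ℤ) × (ℤ/4ℤ). -/
/-- `X₀(15)`: the elliptic curve over `ℚ` with Cremona label 15A1, given by the Weierstrass
equation `y² + xy + y = x³ + x² − 10x − 10`. -/
def X015 : WeierstrassCurve ℚ := ⟨1, 1, 1, -10, -10⟩


lemma four_num {p q r s : ℤ} (h : p * q = r * s) (hp : p ≠ 0) :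
    ∃ A B C D : ℤ, p = A * B ∧ q = C * D ∧ r = A * C ∧ s = B * D := by
  obtain ⟨A, B, ⟨C, hC⟩, ⟨D, hD⟩, hAB⟩ := exists_dvd_and_dvd_of_dvd_mul (Dvd.intro q h)
  refine ⟨A, B, C, D, hAB, ?_, hC, hD⟩
  apply mul_left_cancel₀ hp
  rw [h, hC, hD, hAB]; ring

lemma pos_sq_of_coprime {a b c : ℤ} (h : IsCoprime a b) (ha : 0 < a) (e : a * b = c ^ 2) :
    ∃ x : ℤ, a = x ^ 2 := by
  obtain ⟨x, hx⟩ := Int.sq_of_gcd_eq_one (Int.isCoprime_iff_gcd_eq_one.1 h) e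
  refine ⟨x, hx.resolve_right ?_⟩
  intro h'; nlinarith [sq_nonneg x]

lemma coprime_of_prime {a b : ℤ} (h : ∀ p : ℤ, Prime p → p ∣ a → p ∣ b → False)
    (hab : ¬ (a = 0 ∧ b = 0)) : IsCoprime a b := by
  apply isCoprime_of_prime_dvd hab
  intro p hp h1 h2; exact h p hp h1 h2

lemma sq_emod8 (a : ℤ) : (a % 2 = 1 ∧ a ^ 2 % 8 = 1) ∨ (a % 4 = 2 ∧ a ^ 2 % 8 = 4) ∨
    (a % 4 = 0 ∧ a ^ 2 % 8 = 0) := by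
  have : a % 8 = 0 ∨ a % 8 = 1 ∨ a % 8 = 2 ∨ a % 8 = 3 ∨ a % 8 = 4 ∨ a % 8 = 5 ∨ a % 8 = 6 ∨ a % 8 = 7 := by omega
  rcases this with h | h | h | h | h | h | h | h <;> simp [pow_two, Int.mul_emod, h] <;> omega

/-- both squares: parity + descent core. -/
lemma core_one {m l δ : ℤ} (hml : IsCoprime m l) (hm : m % 2 = 1) (hl : l ≠ 0)
    (h : (m ^ 2 + 16 * l ^ 2) ^ 2 - 60 * m ^ 2 * l ^ 2 = δ ^ 2) :
    ∃ y1 y2 x1 x2 : ℤ, y1 ≠ 0 ∧ y2 ≠ 0 ∧ y1 ^ 2 + y2 ^ 2 = x2 ^ 2 ∧ y1 ^ 2 + 16 * y2 ^ 2 = x1 ^ 2 ∧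
      x2 ∣ l := by
  have hm0 : m ≠ 0 := by rintro rfl; simp at hm
  have main : ∀ A B : ℤ, 0 < A → 0 < B → A + B = m ^ 2 + 16 * l ^ 2 → A * B = 15 * (m * l) ^ 2 →
      (3 : ℤ) ∣ B → ∃ y1 y2 x1 x2 : ℤ, y1 ≠ 0 ∧ y2 ≠ 0 ∧ y1 ^ 2 + y2 ^ 2 = x2 ^ 2 ∧ y1 ^ 2 + 16 * y2 ^ 2 = x1 ^ 2 ∧
      x2 ∣ l := by
    intro A B hA hB hs hp h3
    have two : ∀ p : ℤ, Prime p → p ∣ m → p ∣ l → False := fun p hpp h1 h2 =>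
      hpp.not_isUnit (hml.isUnit_of_dvd' h1 h2)
    have hco : IsCoprime A B := by
      apply coprime_of_prime _ (by omega)
      intro p hpp h1 h2
      have hsum : p ∣ m ^ 2 + 16 * l ^ 2 := hs ▸ dvd_add h1 h2
      have key : p ∣ m * l → False := by
        intro h5
        rcases hpp.dvd_or_dvd h5 with h5 | h5
        · have : p ∣ 16 * l ^ 2 := (dvd_add_right (dvd_pow h5 two_ne_zero)).1 hsum
          rcases hpp.dvd_or_dvd this with h6 | h6
          · have h7 : p ∣ 2 := hpp.dvd_of_dvd_pow (show p ∣ 2 ^ 4 by norm_num; exact h6)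
            have : m ^ 2 = 1 + 2 * ((m ^ 2 - 1) / 2) := by
              have := sq_emod8 m; omega
            have h8 : p ∣ 1 := by
              have h9 : p ∣ m ^ 2 - 2 * ((m ^ 2 - 1) / 2) :=
                dvd_sub (dvd_pow h5 two_ne_zero) (Dvd.dvd.mul_right h7 _)
              have : m ^ 2 - 2 * ((m ^ 2 - 1) / 2) = 1 := by omega
              rwa [this] at h9
            exact hpp.not_isUnit (isUnit_of_dvd_one h8)
          · exact two p hpp h5 (hpp.dvd_of_dvd_pow h6)
        · have : p ∣ m ^ 2 := (dvd_add_left (Dvd.dvd.mul_left (dvd_pow h5 two_ne_zero) _)).1 hsum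
          exact two p hpp (hpp.dvd_of_dvd_pow this) h5
      by_cases h5 : p ∣ m * l
      · exact key h5
      · have hpp2 : p * p ∣ 15 * (m * l) ^ 2 := hp ▸ mul_dvd_mul h1 h2
        have hc : IsCoprime p (m * l) := (hpp.irreducible.coprime_iff_not_dvd).2 h5
        have hc2 : IsCoprime (p * p) ((m * l) ^ 2) := (hc.mul_left hc).pow_right
        have h15 : p * p ∣ 15 := hc2.dvd_of_dvd_mul_right hpp2
        have hle := Int.le_of_dvd (by norm_num) h15
        have hb1 : p ≤ 3 := by nlinarith
        have hb2 : -3 ≤ p := by nlinarith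
        have hnu := hpp.not_isUnit
        rw [Int.isUnit_iff] at hnu
        have hp0 := hpp.ne_zero
        interval_cases p <;> simp_all
    obtain ⟨B, rfl⟩ := h3
    have hB : 0 < B := by omega
    have hp' : A * B = 5 * (m * l) ^ 2 := by linarith
    have hco : IsCoprime A B := hco.of_mul_right_right
    have p5 : Prime (5 : ℤ) := by norm_num
    have h5 : (5:ℤ) ∣ A * B := ⟨_, hp'⟩
    rcases p5.dvd_or_dvd h5 with ⟨A, rfl⟩ | ⟨B, rfl⟩
    · exfalso
      have hA : 0 < A := by omega
      have hco : IsCoprime A B := hco.of_mul_left_right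
      have e : A * B = (m * l) ^ 2 := by linarith
      obtain ⟨y, rfl⟩ := pos_sq_of_coprime hco hA e
      obtain ⟨x, rfl⟩ := pos_sq_of_coprime hco.symm hB (by rw [mul_comm]; exact e)
      have hxy : IsCoprime x y := ((IsCoprime.pow_iff two_pos two_pos).1 hco).symm
      have hx2 : x % 4 = 2 ∧ y % 2 = 1 := by
        rcases sq_emod8 x with h1 | h1 | h1 <;> rcases sq_emod8 y with h2 | h2 | h2 <;>
          rcases sq_emod8 m with h3 | h3 | h3 <;> rcases sq_emod8 l with h4 | h4 | h4 <;>
          omega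
      obtain ⟨x, rfl⟩ : ∃ x', x = 2 * x' := ⟨x / 2, by omega⟩
      have hx1 : x % 2 = 1 := by omega
      have e2 : (m * l - 2 * x * y) * (m * l + 2 * x * y) = 0 := by linear_combination -e
      have sub : ∀ y : ℤ, y % 2 = 1 → IsCoprime (2 * x) y → 5 * y ^ 2 + 3 * (2 * x) ^ 2 = m ^ 2 + 16 * l ^ 2 →
        (2 * x) * y = m * l → False := by
        intro y hy hxy hs e3
        have hl2 : l % 2 = 0 := by
          have : 2 ∣ m * l := ⟨x * y, by linarith⟩
          rcases Int.prime_two.dvd_or_dvd this with h | h <;> omega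
        obtain ⟨k, rfl⟩ : ∃ k, l = 2 * k := ⟨l / 2, by omega⟩
        have e4 : x * y = m * k := by linarith
        obtain ⟨x1, x2, y1, y2, rfl, rfl, rfl, rfl⟩ := four_num e4 (by rintro rfl; simp at hx1)
        have hy1 : y1 % 2 = 1 := by
          rcases Int.emod_two_eq_zero_or_one y1 with h | h
          · simp [Int.mul_emod, h] at hy
          · exact h
        have hx2 : x2 % 2 = 1 := by
          rcases Int.emod_two_eq_zero_or_one x2 with h | h
          · simp [Int.mul_emod, h] at hx1
          · exact h
        have hy2 : y2 % 2 = 1 := by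
          rcases Int.emod_two_eq_zero_or_one y2 with h | h
          · simp [Int.mul_emod, h] at hy
          · exact h
        have hx11 : x1 % 2 = 1 := by
          rcases Int.emod_two_eq_zero_or_one x1 with h | h
          · simp [Int.mul_emod, h] at hx1
          · exact h
        have c1 : IsCoprime x1 y2 := (hxy.of_mul_left_right).of_mul_left_left.of_mul_right_right
        have c2 : IsCoprime x2 y1 := (hxy.of_mul_left_right).of_mul_left_right.of_mul_right_left
        have e5 : x1 ^ 2 * (12 * x2 ^ 2 - y1 ^ 2) = y2 ^ 2 * (64 * x2 ^ 2 - 5 * y1 ^ 2) := by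
          linear_combination hs
        obtain ⟨κ, hκ⟩ : x1 ^ 2 ∣ 64 * x2 ^ 2 - 5 * y1 ^ 2 :=
          (c1.pow).dvd_of_dvd_mul_left (Dvd.intro _ e5)
        have hκ2 : 12 * x2 ^ 2 - y1 ^ 2 = y2 ^ 2 * κ := by
          apply mul_left_cancel₀ (pow_ne_zero 2 (show x1 ≠ 0 by rintro rfl; simp at hx11))
          rw [e5, hκ]; ring
        have d1 : κ ∣ 4 * x2 ^ 2 := ⟨x1 ^ 2 - 5 * y2 ^ 2, by linear_combination hκ - 5 * hκ2⟩
        have d2 : κ ∣ 4 * y1 ^ 2 := ⟨12 * x1 ^ 2 - 64 * y2 ^ 2, by linear_combination 12 * hκ - 64 * hκ2⟩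
        have d3 : κ ∣ 4 := by
          obtain ⟨a, b, hab⟩ := (c2.pow : IsCoprime (x2 ^ 2) (y1 ^ 2))
          have : (4:ℤ) = a * (4 * x2 ^ 2) + b * (4 * y1 ^ 2) := by linear_combination -4 * hab
          rw [this]
          exact dvd_add (Dvd.dvd.mul_left d1 _) (Dvd.dvd.mul_left d2 _)
        have b1 := Int.le_of_dvd (by norm_num) d3
        have b2 := Int.le_of_dvd (by norm_num) ((neg_dvd).2 d3)
        have s1 := sq_emod8 x2
        have s2 := sq_emod8 y1
        have s3 := sq_emod8 y2
        have b3 : -4 ≤ κ := by omega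
        interval_cases κ <;> omega
      rcases mul_eq_zero.1 e2 with e2 | e2
      · exact sub y hx2.2 hxy (by linarith) (by linarith)
      · exact sub (-y) (by omega) hxy.neg_right (by linarith) (by linarith)
    · have hB : 0 < B := by omega
      have hco : IsCoprime A B := hco.of_mul_right_right
      have e : A * B = (m * l) ^ 2 := by linarith
      obtain ⟨x, rfl⟩ := pos_sq_of_coprime hco hA e
      obtain ⟨y, rfl⟩ := pos_sq_of_coprime hco.symm hB (by rw [mul_comm]; exact e)
      have hxy : IsCoprime x y := ((IsCoprime.pow_iff two_pos two_pos).1 hco)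
      have hx0 : x ≠ 0 := by rintro rfl; simp at hA
      have hy0 : y ≠ 0 := by rintro rfl; simp at hB
      have e2 : (m * l - x * y) * (m * l + x * y) = 0 := by linear_combination -e
      have sub : ∀ y : ℤ, y ≠ 0 → IsCoprime x y → x ^ 2 + 15 * y ^ 2 = m ^ 2 + 16 * l ^ 2 →
        x * y = m * l → ∃ y1 y2 x1 x2 : ℤ, y1 ≠ 0 ∧ y2 ≠ 0 ∧ y1 ^ 2 + y2 ^ 2 = x2 ^ 2 ∧ y1 ^ 2 + 16 * y2 ^ 2 = x1 ^ 2 ∧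
      x2 ∣ l := by
        intro y hy0 hxy hs e4
        obtain ⟨x1, x2, y1, y2, rfl, rfl, rfl, rfl⟩ := four_num e4 hx0
        have c1 : IsCoprime x1 y2 := hxy.of_mul_left_left.of_mul_right_right
        have c2 : IsCoprime x2 y1 := hxy.of_mul_left_right.of_mul_right_left
        have e5 : x1 ^ 2 * (x2 ^ 2 - y1 ^ 2) = y2 ^ 2 * (16 * x2 ^ 2 - 15 * y1 ^ 2) := by
          linear_combination hs
        obtain ⟨κ, hκ⟩ : x1 ^ 2 ∣ 16 * x2 ^ 2 - 15 * y1 ^ 2 :=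
          (c1.pow).dvd_of_dvd_mul_left (Dvd.intro _ e5)
        have hκ2 : x2 ^ 2 - y1 ^ 2 = y2 ^ 2 * κ := by
          apply mul_left_cancel₀ (pow_ne_zero 2 (show x1 ≠ 0 by rintro rfl; simp at hm0))
          rw [e5, hκ]; ring
        have d1 : κ ∣ x2 ^ 2 := ⟨x1 ^ 2 - 15 * y2 ^ 2, by linear_combination hκ - 15 * hκ2⟩
        have d2 : κ ∣ y1 ^ 2 := ⟨x1 ^ 2 - 16 * y2 ^ 2, by linear_combination hκ - 16 * hκ2⟩
        have hu : IsUnit κ := (c2.pow : IsCoprime (x2 ^ 2) (y1 ^ 2)).isUnit_of_dvd' d1 d2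
        rcases Int.isUnit_iff.1 hu with rfl | rfl
        · exact ⟨y1, y2, x1, x2, by rintro rfl; simp at hy0, by rintro rfl; simp at hy0,
            by linarith, by linarith, Dvd.intro _ rfl⟩
        · exfalso
          have hy1 : y1 % 2 = 1 := by
            rcases Int.emod_two_eq_zero_or_one y1 with h | h
            · simp [Int.mul_emod, h] at hm
            · exact h
          have hx1 : x1 % 2 = 1 := by
            rcases Int.emod_two_eq_zero_or_one x1 with h | h
            · simp [Int.mul_emod, h] at hm
            · exact h
          have s2 := sq_emod8 y1
          have s3 := sq_emod8 x1
          omega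
      rcases mul_eq_zero.1 e2 with e2 | e2
      · exact sub y hy0 hxy (by linarith) (by linarith)
      · exact sub (-y) (by simpa using hy0) hxy.neg_right (by linarith) (by linarith)
  have hδ : δ % 2 = 1 := by
    rcases Int.emod_two_eq_zero_or_one δ with h' | h'
    · have := congrArg (· % 2) h
      simp [pow_two, Int.mul_emod, Int.add_emod, Int.sub_emod, hm, h'] at this
    · exact h'
  have hT : (m ^ 2 + 16 * l ^ 2) % 2 = 1 := by have := sq_emod8 m; omega
  obtain ⟨A, hA⟩ : ∃ A, m ^ 2 + 16 * l ^ 2 - δ = 2 * A := ⟨(m ^ 2 + 16 * l ^ 2 - δ) / 2, by omega⟩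
  obtain ⟨B, hB⟩ : ∃ B, m ^ 2 + 16 * l ^ 2 + δ = 2 * B := ⟨(m ^ 2 + 16 * l ^ 2 + δ) / 2, by omega⟩
  have hs : A + B = m ^ 2 + 16 * l ^ 2 := by linarith
  have hp : A * B = 15 * (m * l) ^ 2 := by
    have : 4 * (A * B) = 4 * (15 * (m * l) ^ 2) := by
      calc 4 * (A * B) = (2 * A) * (2 * B) := by ring
        _ = _ := by rw [← hA, ← hB]; linear_combination h
    linarith
  have hml2 : 0 < (m * l) ^ 2 := by positivity
  have hs0 : 0 < m ^ 2 + 16 * l ^ 2 := by positivity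
  have hA0 : 0 < A := by
    by_contra hc
    nlinarith
  have hB0 : 0 < B := by
    by_contra hc
    nlinarith
  have h3 : (3:ℤ) ∣ A * B := ⟨5 * (m * l) ^ 2, by linarith⟩
  rcases Int.prime_three.dvd_or_dvd h3 with h3 | h3
  · exact main B A hB0 hA0 (by linarith) (by linarith) h3
  · exact main A B hA0 hB0 hs hp h3

set_option maxHeartbeats 1600000 in
lemma core_two {a c d e : ℤ} (hac : IsCoprime a c) (ha : a % 2 = 1) (hc : c % 2 = 1)
    (hd : 0 < d) (h1 : 4 * a ^ 2 + c ^ 2 = 5 * d ^ 2) (h2 : a ^ 2 + 4 * c ^ 2 = 5 * e ^ 2)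
    (hne : a ^ 2 ≠ c ^ 2) :
    ∃ B C z : ℤ, B ≠ 0 ∧ C ≠ 0 ∧ B ^ 2 ≠ C ^ 2 ∧
      (4 * B ^ 2 + C ^ 2) * (4 * B ^ 2 + 16 * C ^ 2) = z ^ 2 ∧ 4 * B ^ 2 + C ^ 2 < 5 * d ^ 2 := by
  have ha0 : a ≠ 0 := by rintro rfl; simp at ha
  have hc0 : c ≠ 0 := by rintro rfl; simp at hc
  have ha2 : 0 < a ^ 2 := by positivity
  have hc2 : 0 < c ^ 2 := by positivity
  have two : ∀ p : ℤ, Prime p → p ∣ a → p ∣ c → False := fun p hpp h1 h2 =>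
      hpp.not_isUnit (hac.isUnit_of_dvd' h1 h2)
  have main : ∀ e : ℤ, a ^ 2 + 4 * c ^ 2 = 5 * e ^ 2 → 3 ∣ 2 * d + e → ∃ B C z : ℤ, B ≠ 0 ∧ C ≠ 0 ∧ B ^ 2 ≠ C ^ 2 ∧
      (4 * B ^ 2 + C ^ 2) * (4 * B ^ 2 + 16 * C ^ 2) = z ^ 2 ∧ 4 * B ^ 2 + C ^ 2 < 5 * d ^ 2 := by
    intro e h2 h3
    have he : e % 2 = 1 := by
      have := sq_emod8 e; have := sq_emod8 a; have := sq_emod8 c; omega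
    have e1 : (2 * d - e) * (2 * d + e) = 3 * a ^ 2 := by linarith
    have e1' : (2 * e - d) * (2 * e + d) = 3 * c ^ 2 := by linarith
    have hco : IsCoprime (2 * d - e) (2 * d + e) := by
      apply coprime_of_prime _ (by omega)
      intro p hpp g1 g2
      have g3 : p ∣ 2 * (2 * d) := by
        have := dvd_add g1 g2; ring_nf at this ⊢; exact this
      have g4 : p ∣ 2 * e := by
        have := dvd_sub g2 g1; ring_nf at this ⊢; exact this
      have np2 : ¬ p ∣ 2 := by
        intro h
        have h6 : p ∣ e := (dvd_sub_right (Dvd.dvd.mul_right h d)).1 g1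
        have h7 : p ∣ 1 := by
          have := dvd_sub h6 (Dvd.dvd.mul_right h (e / 2))
          have h8 : e - 2 * (e / 2) = 1 := by omega
          rwa [h8] at this
        exact hpp.not_isUnit (isUnit_of_dvd_one h7)
      have g5 : p ∣ e := (hpp.dvd_or_dvd g4).resolve_left np2
      have g6 : p ∣ d := (hpp.dvd_or_dvd ((hpp.dvd_or_dvd g3).resolve_left np2)).resolve_left np2
      have k1 : p * p ∣ 3 * a ^ 2 := e1 ▸ mul_dvd_mul g1 g2
      have k2 : p * p ∣ 3 * c ^ 2 := e1' ▸ mul_dvd_mul (dvd_sub (Dvd.dvd.mul_left g5 2) g6)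
        (dvd_add (Dvd.dvd.mul_left g5 2) g6)
      have k3 : p * p ∣ 3 := by
        obtain ⟨s, t, hst⟩ := (hac.pow : IsCoprime (a ^ 2) (c ^ 2))
        have : (3:ℤ) = s * (3 * a ^ 2) + t * (3 * c ^ 2) := by linear_combination -3 * hst
        rw [this]
        exact dvd_add (Dvd.dvd.mul_left k1 _) (Dvd.dvd.mul_left k2 _)
      have hle := Int.le_of_dvd (by norm_num) k3
      have hb1 : p ≤ 1 := by nlinarith
      have hb2 : -1 ≤ p := by nlinarith
      have hnu := hpp.not_isUnit
      rw [Int.isUnit_iff] at hnu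
      have hp0 := hpp.ne_zero
      omega
    obtain ⟨Y, hY⟩ := h3
    have e3 : (2 * d - e) * Y = a ^ 2 := by rw [hY] at e1; linarith
    have hco2 : IsCoprime (2 * d - e) Y := by rw [hY] at hco; exact hco.of_mul_right_right
    have pY : 0 < Y := by
      by_contra hh
      have : 0 < 2 * d - e := by omega
      nlinarith
    have pX : 0 < 2 * d - e := by
      by_contra hh
      nlinarith
    obtain ⟨x, hx⟩ := pos_sq_of_coprime hco2 pX e3
    obtain ⟨y, rfl⟩ := pos_sq_of_coprime hco2.symm pY (by rw [mul_comm]; exact e3)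
    have hxy : IsCoprime x y := by
      rw [hx] at hco2; exact (IsCoprime.pow_iff two_pos two_pos).1 hco2
    have hx3 : ¬ (3 ∣ x) := by
      rintro ⟨k, rfl⟩
      have := hco.isUnit_of_dvd' (x := 3) ⟨3 * k ^ 2, by rw [hx]; ring⟩ ⟨_, hY⟩
      rw [Int.isUnit_iff] at this; omega
    have hodd : x % 2 = 1 ∧ y % 2 = 1 := by
      have := sq_emod8 x; have := sq_emod8 y; omega
    obtain ⟨F, hF⟩ : ∃ F, 5 * y ^ 2 - x ^ 2 = 4 * F := ⟨(5 * y ^ 2 - x ^ 2) / 4, by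
      have := sq_emod8 x; have := sq_emod8 y; omega⟩
    obtain ⟨G, hG⟩ : ∃ G, 9 * y ^ 2 - 5 * x ^ 2 = 4 * G := ⟨(9 * y ^ 2 - 5 * x ^ 2) / 4, by
      have := sq_emod8 x; have := sq_emod8 y; omega⟩
    have hFG : F * G = c ^ 2 := by
      have i1 : 2 * e - d = G := by linarith
      have i2 : 2 * e + d = 3 * F := by linarith
      rw [i1, i2] at e1'; linarith
    have hFo : F % 2 = 1 := by
      have := sq_emod8 x; have := sq_emod8 y; omega
    have hGo : G % 2 = 1 := by
      have := sq_emod8 x; have := sq_emod8 y; omega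
    have hcoF : IsCoprime F G := by
      apply coprime_of_prime _ (by omega)
      intro p hpp g1 g2
      have np2 : ¬ p ∣ 2 := by
        intro h
        have h7 : p ∣ 1 := by
          have := dvd_sub g1 (Dvd.dvd.mul_right h (F / 2))
          have h8 : F - 2 * (F / 2) = 1 := by omega
          rwa [h8] at this
        exact hpp.not_isUnit (isUnit_of_dvd_one h7)
      have g3 : p ∣ 2 * (2 * y ^ 2) := by
        have : 2 * (2 * y ^ 2) = 5 * F - G := by linarith
        rw [this]; exact dvd_sub (Dvd.dvd.mul_left g1 _) g2
      have g4 : p ∣ y := hpp.dvd_of_dvd_pow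
        ((hpp.dvd_or_dvd ((hpp.dvd_or_dvd g3).resolve_left np2)).resolve_left np2)
      have g5 : p ∣ x ^ 2 := by
        have : x ^ 2 = 5 * y ^ 2 - 4 * F := by linarith
        rw [this]
        exact dvd_sub (Dvd.dvd.mul_left (dvd_pow g4 two_ne_zero) _) (Dvd.dvd.mul_left g1 _)
      exact hpp.not_isUnit (hxy.isUnit_of_dvd' (hpp.dvd_of_dvd_pow g5) g4)
    have hF0 : 0 < F := by
      by_contra hh
      have hG0 : 0 < -G := by
        by_contra hh2
        have : F ≠ 0 := by rintro rfl; simp at hFo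
        have : F * G ≤ 0 := by nlinarith
        linarith
      obtain ⟨g, hg⟩ := pos_sq_of_coprime (a := -G) (b := -F) (c := c) hcoF.symm.neg_neg hG0 (by linarith)
      have hx' : x % 3 = 1 ∨ x % 3 = 2 := by omega
      have hg' : g % 3 = 0 ∨ g % 3 = 1 ∨ g % 3 = 2 := by omega
      have x3 : x ^ 2 % 3 = 1 := by rcases hx' with h | h <;> simp [pow_two, Int.mul_emod, h]
      have g3 : g ^ 2 % 3 = 0 ∨ g ^ 2 % 3 = 1 := by
        rcases hg' with h | h | h <;> simp [pow_two, Int.mul_emod, h]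
      omega
    have hG0 : 0 < G := by
      by_contra hh
      nlinarith
    obtain ⟨f, rfl⟩ := pos_sq_of_coprime hcoF hF0 hFG
    obtain ⟨g, rfl⟩ := pos_sq_of_coprime hcoF.symm hG0 (by rw [mul_comm]; exact hFG)
    have hfo : f % 2 = 1 := by have := sq_emod8 f; omega
    have hgo : g % 2 = 1 := by have := sq_emod8 g; omega
    obtain ⟨P, hP⟩ : ∃ P, y - x = 2 * P := ⟨(y - x) / 2, by omega⟩
    obtain ⟨Q, hQ⟩ : ∃ P, y + x = 2 * P := ⟨(y + x) / 2, by omega⟩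
    obtain ⟨R, hR⟩ : ∃ P, g - f = 2 * P := ⟨(g - f) / 2, by omega⟩
    obtain ⟨S, hS⟩ : ∃ P, g + f = 2 * P := ⟨(g + f) / 2, by omega⟩
    obtain rfl : y = P + Q := by linarith
    obtain rfl : x = Q - P := by linarith
    obtain rfl : g = R + S := by linarith
    obtain rfl : f = S - R := by linarith
    have hPQ : P * Q = R * S := by linarith
    have hPQ0 : P * Q ≠ 0 := by
      intro h0
      apply hne
      have t1 : (Q - P) ^ 2 = (P + Q) ^ 2 := by linarith
      have t2 : (S - R) ^ 2 = (P + Q) ^ 2 := by linarith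
      have t3 : (R + S) ^ 2 = (P + Q) ^ 2 := by linarith
      rw [hx, t1] at e3
      rw [t2, t3] at hFG
      rw [← e3, ← hFG]
    have hP0 : P ≠ 0 := left_ne_zero_of_mul hPQ0
    have hQ0 : Q ≠ 0 := right_ne_zero_of_mul hPQ0
    obtain ⟨A, B, C, D, rfl, rfl, rfl, rfl⟩ := four_num hPQ hP0
    have hA0 : A ≠ 0 := left_ne_zero_of_mul hP0
    have hB0 : B ≠ 0 := right_ne_zero_of_mul hP0
    have hC0 : C ≠ 0 := left_ne_zero_of_mul hQ0
    have hD0 : D ≠ 0 := right_ne_zero_of_mul hQ0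
    have key : (A ^ 2 - D ^ 2) * (B ^ 2 - C ^ 2) = -(5 * A * B * C * D) := by linarith
    have hBC : B ^ 2 ≠ C ^ 2 := by
      intro hh
      rw [hh, sub_self, mul_zero] at key
      have : 5 * A * B * C * D ≠ 0 := by positivity
      omega
    have sq : (A * D) ^ 2 * ((4 * B ^ 2 + C ^ 2) * (4 * B ^ 2 + 16 * C ^ 2)) =
        (2 * (B ^ 2 - C ^ 2) * (A ^ 2 + D ^ 2)) ^ 2 := by
      linear_combination (-4 * ((A ^ 2 - D ^ 2) * (B ^ 2 - C ^ 2) -(5 * A * B * C * D))) * key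
    obtain ⟨z, hz⟩ : A * D ∣ 2 * (B ^ 2 - C ^ 2) * (A ^ 2 + D ^ 2) := by
      rw [← Int.pow_dvd_pow_iff two_ne_zero]; exact ⟨_, sq.symm⟩
    refine ⟨B, C, z, hB0, hC0, hBC, ?_, ?_⟩
    · apply mul_left_cancel₀ (pow_ne_zero 2 (mul_ne_zero hA0 hD0))
      rw [sq, hz]; ring
    · have hd1 : 2 ≤ d := by
        by_contra hh
        have : d = 1 := by omega
        subst this
        apply hne
        have : a ^ 2 = 1 := by omega
        omega
      have bb : (A ^ 2 + D ^ 2) * (B ^ 2 + C ^ 2) = (A * B + C * D) ^ 2 + (B * D - A * C) ^ 2 := by ring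
      have bA : 1 ≤ A ^ 2 := by have : 0 < A ^ 2 := by positivity
                                omega
      have bD : 1 ≤ D ^ 2 := by have : 0 < D ^ 2 := by positivity
                                omega
      have b2 : 2 * (B ^ 2 + C ^ 2) ≤ (A ^ 2 + D ^ 2) * (B ^ 2 + C ^ 2) := by
        apply mul_le_mul_of_nonneg_right (by omega) (by positivity)
      have x0 := sq_nonneg (C * D - A * B)
      have c0 := sq_nonneg C
      have : 4 * B ^ 2 + C ^ 2 ≤ 6 * d := by linarith
      nlinarith
  have h3 : (3:ℤ) ∣ (2 * d + e) * (2 * d + -e) := ⟨a ^ 2, by linarith⟩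
  rcases Int.prime_three.dvd_or_dvd h3 with h3 | h3
  · exact main e h2 h3
  · exact main (-e) (by linarith) h3

/-- Rational points on `z² = (q² + 1)(q² + 16)`, in integers. -/
theorem quartic_int (N : ℕ) : ∀ α γ z : ℤ, α ^ 2 + γ ^ 2 ≤ N → α ≠ 0 → γ ≠ 0 →
    (α ^ 2 + γ ^ 2) * (α ^ 2 + 16 * γ ^ 2) = z ^ 2 → α ^ 2 = 4 * γ ^ 2 := by
  induction N using Nat.strong_induction_on with
  | _ N ih =>
  intro α γ z hN hα hγ hz
  have hα2 : 0 < α ^ 2 := by positivity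
  have hγ2 : 0 < γ ^ 2 := by positivity
  have IH : ∀ α' γ' z' : ℤ, α' ^ 2 + γ' ^ 2 < α ^ 2 + γ ^ 2 → α' ≠ 0 → γ' ≠ 0 →
      (α' ^ 2 + γ' ^ 2) * (α' ^ 2 + 16 * γ' ^ 2) = z' ^ 2 → α' ^ 2 = 4 * γ' ^ 2 := by
    intro α' γ' z' h
    have hnn : 0 ≤ α' ^ 2 + γ' ^ 2 := by positivity
    exact ih (α' ^ 2 + γ' ^ 2).toNat (by omega) α' γ' z' (by omega)
  clear ih hN
  by_cases hco : IsCoprime α γ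
  swap
  · have : ∃ p : ℤ, Prime p ∧ p ∣ α ∧ p ∣ γ := by
      by_contra hh
      push Not at hh
      exact hco (coprime_of_prime (fun p hp h1 h2 => hh p hp h1 h2) (by simp [hα]))
    obtain ⟨p, hp, ⟨α', rfl⟩, ⟨γ', rfl⟩⟩ := this
    have hp0 := hp.ne_zero
    have hp2 : 1 < p ^ 2 := by
      have h1 : ¬ IsUnit p := hp.not_isUnit
      rw [Int.isUnit_iff] at h1
      have : 2 ≤ p ∨ p ≤ -2 := by omega
      rcases this with h | h <;> nlinarith
    obtain ⟨w, hw⟩ : p ^ 2 ∣ z := by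
      rw [← Int.pow_dvd_pow_iff two_ne_zero]
      exact ⟨(α' ^ 2 + γ' ^ 2) * (α' ^ 2 + 16 * γ' ^ 2), by rw [← hz]; ring⟩
    have hα' := right_ne_zero_of_mul hα
    have hγ' := right_ne_zero_of_mul hγ
    have := IH α' γ' w (by
      have h1 : 0 < α' ^ 2 := by positivity
      have h2 : 0 < γ' ^ 2 := by positivity
      nlinarith) hα' hγ' (by
      apply mul_left_cancel₀ (pow_ne_zero 4 hp0)
      rw [hw] at hz; linear_combination hz)
    linear_combination p ^ 2 * this
  have two : ∀ p : ℤ, Prime p → p ∣ α → p ∣ γ → False := fun p hpp h1 h2 =>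
      hpp.not_isUnit (hco.isUnit_of_dvd' h1 h2)
  have caseI : ∀ δ ε : ℤ, α ^ 2 + γ ^ 2 = δ ^ 2 → α ^ 2 + 16 * γ ^ 2 = ε ^ 2 → False := by
    intro δ ε h1 h2
    have hnontriv : ∀ y1 y2 x1 x2 : ℤ, y1 ≠ 0 → y2 ≠ 0 → y1 ^ 2 + y2 ^ 2 = x2 ^ 2 →
        y1 ^ 2 + 16 * y2 ^ 2 = x1 ^ 2 → y1 ^ 2 + y2 ^ 2 < α ^ 2 + γ ^ 2 → False := by
      intro y1 y2 x1 x2 g1 g2 g3 g4 g5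
      have := IH y1 y2 (x2 * x1) g5 g1 g2 (by rw [g3, g4]; ring)
      have h5 : x2 ^ 2 = 5 * y2 ^ 2 := by linarith
      have p5 : Prime (5 : ℤ) := by norm_num
      have : IsSquare (5 : ℤ) := by
        obtain ⟨k, hk⟩ : y2 ∣ x2 := by
          rw [← Int.pow_dvd_pow_iff two_ne_zero]; exact ⟨5, by linarith⟩
        refine ⟨k, ?_⟩
        apply mul_left_cancel₀ (pow_ne_zero 2 g2)
        rw [hk] at h5; linear_combination -h5
      exact p5.irreducible.not_isSquare this
    rcases Int.emod_two_eq_zero_or_one γ with hg | hg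
    · have ha : α % 2 = 1 := by
        rcases Int.emod_two_eq_zero_or_one α with ha | ha
        · exact (two 2 Int.prime_two (by omega) (by omega)).elim
        · exact ha
      have hco' : IsCoprime α (4 * γ) := by
        refine IsCoprime.mul_right ?_ hco
        have : IsCoprime α 2 := by
          refine ⟨1, -(α / 2), ?_⟩
          omega
        have := (this.mul_right this); norm_num at this; exact this
      have hpt : PythagoreanTriple α (4 * γ) ε := by
        unfold PythagoreanTriple; linear_combination h2
      obtain ⟨m, n, hmn, -, hgcd, hpar⟩ := PythagoreanTriple.coprime_classification.1
        ⟨hpt, Int.isCoprime_iff_gcd_eq_one.1 hco'⟩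
      have hcomn : IsCoprime m n := Int.isCoprime_iff_gcd_eq_one.2 hgcd
      have fin : ∀ m n : ℤ, IsCoprime m n → m % 2 = 1 → n % 2 = 0 → α ^ 2 = (m ^ 2 - n ^ 2) ^ 2 →
          4 * γ = 2 * m * n → False := by
        intro m n hcomn hm hn e1 e2
        have e3 : 2 * γ = m * n := by linarith
        have hn4 : n % 4 = 0 := by
          by_contra hh
          obtain ⟨k, rfl⟩ : ∃ k, n = 2 * k := ⟨n / 2, by omega⟩
          have : γ = m * k := by linarith
          have hk : k % 2 = 1 := by omega
          simp [this, Int.mul_emod, hm, hk] at hg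
        obtain ⟨l, rfl⟩ : ∃ k, n = 4 * k := ⟨n / 4, by omega⟩
        have e4 : γ = 2 * (m * l) := by linarith
        have hl : l ≠ 0 := by rintro rfl; simp at e4; exact hγ e4
        obtain ⟨y1, y2, x1, x2, f1, f2, f3, f4, f5⟩ := core_one (δ := δ)
          hcomn.of_mul_right_right hm hl (by rw [← h1, e1, e4]; ring)
        refine hnontriv y1 y2 x1 x2 f1 f2 f3 f4 ?_
        have f6 : x2 ^ 2 ∣ γ ^ 2 := pow_dvd_pow_of_dvd (f5.trans ⟨2 * m, by rw [e4]; ring⟩) 2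
        have := Int.le_of_dvd hγ2 f6
        linarith
      rcases hmn with ⟨f1, f2⟩ | ⟨f1, f2⟩
      · rcases hpar with ⟨g1, g2⟩ | ⟨g1, g2⟩
        · exact fin n m hcomn.symm g2 g1 (by rw [f1]; ring) (by linarith)
        · exact fin m n hcomn g1 g2 (by rw [f1]) (by linarith)
      · rw [mul_assoc] at f1; omega
    · have h4 : α % 4 = 0 := by
        have := sq_emod8 δ
        rcases sq_emod8 γ with hh | hh | hh
        · rcases sq_emod8 α with hh' | hh' | hh'
          · omega
          · exfalso
            obtain ⟨k, rfl⟩ : ∃ k, α = 2 * k := ⟨α / 2, by omega⟩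
            obtain ⟨e, rfl⟩ : ∃ k, ε = 2 * k := ⟨ε / 2, by have := sq_emod8 ε; omega⟩
            have := sq_emod8 k
            have := sq_emod8 e
            have : k ^ 2 + 4 * γ ^ 2 = e ^ 2 := by linarith
            omega
          · exact hh'.1
        · omega
        · omega
      obtain ⟨k, rfl⟩ : ∃ k, α = 4 * k := ⟨α / 4, by omega⟩
      obtain ⟨e, rfl⟩ : ∃ k, ε = 4 * k := by
        have : (4:ℤ) ∣ ε := by
          rw [← Int.pow_dvd_pow_iff two_ne_zero]; exact ⟨k ^ 2 + γ ^ 2, by rw [← h2]; ring⟩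
        exact this
      have hk : k ≠ 0 := right_ne_zero_of_mul hα
      have : 0 < k ^ 2 := by positivity
      exact hnontriv γ k δ e hγ hk (by linarith) (by linarith) (by linarith)
  have caseII : ∀ δ ε : ℤ, 0 < δ → α ^ 2 + γ ^ 2 = 5 * δ ^ 2 → α ^ 2 + 16 * γ ^ 2 = 5 * ε ^ 2 →
      α ^ 2 = 4 * γ ^ 2 := by
    intro δ ε hδ h1 h2
    have hg : γ % 2 = 1 ∧ α % 2 = 0 := by
      have t1 : ¬ (α % 2 = 0 ∧ γ % 2 = 0) := fun h => two 2 Int.prime_two (by omega) (by omega)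
      have := sq_emod8 α; have := sq_emod8 γ; have := sq_emod8 δ; have := sq_emod8 ε
      omega
    obtain ⟨e, rfl⟩ : ∃ k, ε = 2 * k := ⟨ε / 2, by
      have := sq_emod8 ε; have := sq_emod8 α; omega⟩
    obtain ⟨a, rfl⟩ : ∃ k, α = 2 * k := ⟨α / 2, by omega⟩
    have h1' : 4 * a ^ 2 + γ ^ 2 = 5 * δ ^ 2 := by linarith
    have h2' : a ^ 2 + 4 * γ ^ 2 = 5 * e ^ 2 := by linarith
    have ha : a % 2 = 1 := by
      have := sq_emod8 a; have := sq_emod8 γ; have := sq_emod8 δ; have := sq_emod8 e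
      omega
    by_contra hne
    obtain ⟨B, C, z', b1, b2, b3, b4, b5⟩ := core_two hco.of_mul_left_right ha hg.1 hδ h1' h2'
      (fun h => hne (by linarith))
    have := IH (2 * B) C z' (by linarith) (by simpa using b1) b2 (by linear_combination b4)
    exact b3 (by linarith)
  have hX : 0 < α ^ 2 + γ ^ 2 := by positivity
  have hY : 0 < α ^ 2 + 16 * γ ^ 2 := by positivity
  by_cases h5 : (5:ℤ) ∣ α ^ 2 + γ ^ 2
  · obtain ⟨X, hX'⟩ := h5
    obtain ⟨Y, hY'⟩ : (5:ℤ) ∣ α ^ 2 + 16 * γ ^ 2 := ⟨X + 3 * γ ^ 2, by linarith⟩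
    have p5 : Prime (5 : ℤ) := by norm_num
    obtain ⟨w, rfl⟩ : (5:ℤ) ∣ z := by
      rw [← Int.pow_dvd_pow_iff two_ne_zero]; exact ⟨X * Y, by rw [← hz, hX', hY']; ring⟩
    have e : X * Y = w ^ 2 := by rw [hX', hY'] at hz; linarith
    have hcXY : IsCoprime X Y := by
      apply coprime_of_prime _ (by omega)
      intro p hp g1 g2
      have g3 : p ∣ 3 * γ ^ 2 := by
        have : 3 * γ ^ 2 = Y - X := by linarith
        rw [this]; exact dvd_sub g2 g1
      rcases hp.dvd_or_dvd g3 with g4 | g4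
      · have g5 : (3:ℤ) ∣ X := by
          have := (hp.associated_of_dvd Int.prime_three g4)
          exact this.symm.dvd.trans g1
        have : α % 3 = 0 ∨ α % 3 = 1 ∨ α % 3 = 2 := by omega
        have : γ % 3 = 0 ∨ γ % 3 = 1 ∨ γ % 3 = 2 := by omega
        have s1 : α ^ 2 % 3 = if α % 3 = 0 then 0 else 1 := by
          rcases ‹α % 3 = 0 ∨ _› with h | h | h <;> simp [pow_two, Int.mul_emod, h]
        have s2 : γ ^ 2 % 3 = if γ % 3 = 0 then 0 else 1 := by
          rcases ‹γ % 3 = 0 ∨ _› with h | h | h <;> simp [pow_two, Int.mul_emod, h]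
        have : ¬ (α % 3 = 0 ∧ γ % 3 = 0) := fun h => two 3 Int.prime_three (by omega) (by omega)
        split_ifs at s1 s2 <;> omega
      · have g5 := hp.dvd_of_dvd_pow g4
        have g6 : p ∣ α ^ 2 := by
          have : α ^ 2 = 5 * X - γ ^ 2 := by linarith
          rw [this]; exact dvd_sub (Dvd.dvd.mul_left g1 _) g4
        exact two p hp (hp.dvd_of_dvd_pow g6) g5
    obtain ⟨δ, rfl⟩ := pos_sq_of_coprime hcXY (by omega) e
    obtain ⟨ε, rfl⟩ := pos_sq_of_coprime hcXY.symm (by omega) (by rw [mul_comm]; exact e)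
    have hδ : δ ≠ 0 := by rintro rfl; simp at hX'; omega
    exact caseII |δ| ε (abs_pos.2 hδ) (by rw [sq_abs]; exact hX') hY'
  · exfalso
    have hcXY : IsCoprime (α ^ 2 + γ ^ 2) (α ^ 2 + 16 * γ ^ 2) := by
      apply coprime_of_prime _ (by omega)
      intro p hp g1 g2
      have g3 : p ∣ 3 * (5 * γ ^ 2) := by
        have : 3 * (5 * γ ^ 2) = (α ^ 2 + 16 * γ ^ 2) - (α ^ 2 + γ ^ 2) := by ring
        rw [this]; exact dvd_sub g2 g1
      rcases hp.dvd_or_dvd g3 with g4 | g4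
      · have g5 : (3:ℤ) ∣ α ^ 2 + γ ^ 2 := by
          have := (hp.associated_of_dvd Int.prime_three g4)
          exact this.symm.dvd.trans g1
        have : α % 3 = 0 ∨ α % 3 = 1 ∨ α % 3 = 2 := by omega
        have : γ % 3 = 0 ∨ γ % 3 = 1 ∨ γ % 3 = 2 := by omega
        have s1 : α ^ 2 % 3 = if α % 3 = 0 then 0 else 1 := by
          rcases ‹α % 3 = 0 ∨ _› with h | h | h <;> simp [pow_two, Int.mul_emod, h]
        have s2 : γ ^ 2 % 3 = if γ % 3 = 0 then 0 else 1 := by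
          rcases ‹γ % 3 = 0 ∨ _› with h | h | h <;> simp [pow_two, Int.mul_emod, h]
        have : ¬ (α % 3 = 0 ∧ γ % 3 = 0) := fun h => two 3 Int.prime_three (by omega) (by omega)
        split_ifs at s1 s2 <;> omega
      · rcases hp.dvd_or_dvd g4 with g4 | g4
        · have p5 : Prime (5 : ℤ) := by norm_num
          have := (hp.associated_of_dvd p5 g4)
          exact h5 (this.symm.dvd.trans g1)
        · have g5 := hp.dvd_of_dvd_pow g4
          have g6 : p ∣ α ^ 2 := (dvd_add_left g4).1 g1
          exact two p hp (hp.dvd_of_dvd_pow g6) g5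
    obtain ⟨δ, h1⟩ := pos_sq_of_coprime hcXY hX hz
    obtain ⟨ε, h2⟩ := pos_sq_of_coprime hcXY.symm hY (by rw [mul_comm]; exact hz)
    exact caseI δ ε h1 h2

theorem quartic_rat (q z : ℚ) (h : (q ^ 2 + 1) * (q ^ 2 + 16) = z ^ 2) : q = 0 ∨ q ^ 2 = 4 := by
  by_cases hq : q = 0
  · exact Or.inl hq
  right
  have hd : (q.den : ℚ) ≠ 0 := by exact_mod_cast q.den_ne_zero
  have hqe : q * q.den = q.num := Rat.mul_den_eq_num q
  have hsq : IsSquare ((((q.num ^ 2 + (q.den : ℤ) ^ 2) * (q.num ^ 2 + 16 * (q.den : ℤ) ^ 2) : ℤ)) : ℚ) := by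
    refine ⟨z * q.den ^ 2, ?_⟩
    push_cast
    rw [← hqe]
    linear_combination (q.den : ℚ) ^ 4 * h
  rw [Rat.isSquare_intCast_iff] at hsq
  obtain ⟨w, hw⟩ := hsq
  have := quartic_int (q.num ^ 2 + (q.den : ℤ) ^ 2).toNat q.num q.den w (by
    have : 0 ≤ q.num ^ 2 + (q.den : ℤ) ^ 2 := by positivity
    omega) (by simpa using hq) (by exact_mod_cast q.den_ne_zero) (by rw [hw]; ring)
  have h2 : (q.num : ℚ) ^ 2 = 4 * (q.den : ℚ) ^ 2 := by exact_mod_cast this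
  rw [← hqe] at h2
  apply mul_right_cancel₀ (pow_ne_zero 2 hd)
  linear_combination h2

theorem curve_points (x y : ℚ) (h : y ^ 2 + x * y + y = x ^ 3 + x ^ 2 - 10 * x - 10) :
    (x = -13/4 ∧ y = 9/8) ∨ (x = -1 ∧ y = 0) ∨ (x = 3 ∧ y = -2) ∨ (x = -2 ∧ y = 3) ∨
    (x = -2 ∧ y = -2) ∨ (x = 8 ∧ y = 18) ∨ (x = 8 ∧ y = -27) := by
  by_cases hw : 4 * x + 13 = 0
  · have hx : x = -13/4 := by linarith
    subst hx
    left
    refine ⟨rfl, ?_⟩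
    have : (y - 9/8) ^ 2 = 0 := by linarith
    have := pow_eq_zero_iff (two_ne_zero) |>.1 this
    linarith
  have hY : (4 * (2 * y + x + 1)) ^ 2 = (4 * x + 13) * ((4 * x + 4) * (4 * x - 12)) := by
    linear_combination 64 * h
  have hq2 : (4 * (2 * y + x + 1) / (2 * (4 * x + 13))) ^ 2 = (4 * x + 4) * (4 * x - 12) / (4 * (4 * x + 13)) := by
    rw [div_pow, hY]; field_simp; ring
  have hq := quartic_rat (4 * (2 * y + x + 1) / (2 * (4 * x + 13)))
    (((4 * x + 13) ^ 2 - 225) / (4 * (4 * x + 13))) (by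
      rw [hq2]; field_simp; ring)
  have hcase : (x + 1) * (x - 3) = 0 ∨ (x + 2) * (x - 8) = 0 := by
    rcases hq with hq | hq
    · left
      rw [hq] at hq2
      have := hq2.symm
      rw [zero_pow two_ne_zero, div_eq_zero_iff] at this
      rcases this with h | h
      · linarith
      · exact absurd (by linarith) hw
    · right
      rw [hq, eq_div_iff (by simpa using hw)] at hq2
      linarith
  rcases hcase with hc | hc <;> rcases mul_eq_zero.1 hc with hx | hx
  · obtain rfl : x = -1 := by linarith
    have : y = 0 := by
      have : y ^ 2 = 0 := by linarith
      exact pow_eq_zero_iff two_ne_zero |>.1 this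
    simp [this]
  · obtain rfl : x = 3 := by linarith
    have : y + 2 = 0 := by
      have : (y + 2) ^ 2 = 0 := by linarith
      exact pow_eq_zero_iff two_ne_zero |>.1 this
    have : y = -2 := by linarith
    simp [this]
  · obtain rfl : x = -2 := by linarith
    have : (y - 3) * (y + 2) = 0 := by linarith
    rcases mul_eq_zero.1 this with h | h
    · have : y = 3 := by linarith
      simp [this]
    · have : y = -2 := by linarith
      simp [this]
  · obtain rfl : x = 8 := by linarith
    have : (y - 18) * (y + 27) = 0 := by linarith
    rcases mul_eq_zero.1 this with h | h
    · have : y = 18 := by linarith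
      simp [this]
    · have : y = -27 := by linarith
      simp [this]

open WeierstrassCurve WeierstrassCurve.Affine in
lemma ns_X015 (x y : ℚ) (h : y ^ 2 + x * y + y = x ^ 3 + x ^ 2 - 10 * x - 10)
    (h' : 2 * y + x + 1 ≠ 0 ∨ y ≠ 3 * x ^ 2 + 2 * x - 10) :
    X015.toAffine.Nonsingular x y := by
  rw [nonsingular_iff, equation_iff]
  simp only [X015]
  refine ⟨by linarith, ?_⟩
  rcases h' with h' | h'
  · right; intro hh; apply h'; linarith
  · left; intro hh; apply h'; linarith

/-- A rational point of `X015` from its coordinates. -/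
def mkX015 (x y : ℚ) (h : y ^ 2 + x * y + y = x ^ 3 + x ^ 2 - 10 * x - 10)
    (h' : 2 * y + x + 1 ≠ 0 ∨ y ≠ 3 * x ^ 2 + 2 * x - 10) : X015.toAffine.Point :=
  .some x y (ns_X015 x y h h')

def ptP : X015.toAffine.Point := mkX015 (-2) 3 (by norm_num) (by norm_num)
def ptQ : X015.toAffine.Point := mkX015 (-1) 0 (by norm_num) (by norm_num)
def ptS : X015.toAffine.Point := mkX015 3 (-2) (by norm_num) (by norm_num)

open WeierstrassCurve.Affine in
lemma P_add_P : ptP + ptP = ptS := by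
  unfold ptP ptS mkX015
  rw [Point.add_self_of_Y_ne (by norm_num [negY, X015])]
  simp only [Point.some.injEq]
  rw [slope_of_Y_ne rfl (by norm_num [negY, X015])]
  norm_num [addX, addY, negAddY, negY, X015]

open WeierstrassCurve.Affine in
lemma S_add_S : ptS + ptS = 0 := by
  unfold ptS mkX015
  rw [Point.add_self_of_Y_eq (by norm_num [negY, X015])]

open WeierstrassCurve.Affine in
lemma Q_add_Q : ptQ + ptQ = 0 := by
  unfold ptQ mkX015
  rw [Point.add_self_of_Y_eq (by norm_num [negY, X015])]

open WeierstrassCurve.Affine in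
lemma P_add_S : ptP + ptS = mkX015 (-2) (-2) (by norm_num) (by norm_num) := by
  unfold ptP ptS mkX015
  rw [Point.add_of_X_ne (by norm_num)]
  simp only [Point.some.injEq]
  rw [slope_of_X_ne (by norm_num)]
  norm_num [addX, addY, negAddY, negY, X015]

open WeierstrassCurve.Affine in
lemma Q_add_S : ptQ + ptS = mkX015 (-13/4) (9/8) (by norm_num) (by norm_num) := by
  unfold ptQ ptS mkX015
  rw [Point.add_of_X_ne (by norm_num)]
  simp only [Point.some.injEq]
  rw [slope_of_X_ne (by norm_num)]
  norm_num [addX, addY, negAddY, negY, X015]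

open WeierstrassCurve.Affine in
lemma Q_add_P : ptQ + ptP = mkX015 8 18 (by norm_num) (by norm_num) := by
  unfold ptQ ptP mkX015
  rw [Point.add_of_X_ne (by norm_num)]
  simp only [Point.some.injEq]
  rw [slope_of_X_ne (by norm_num)]
  norm_num [addX, addY, negAddY, negY, X015]

open WeierstrassCurve.Affine in
lemma Q_add_P3 : ptQ + mkX015 (-2) (-2) (by norm_num) (by norm_num) =
    mkX015 8 (-27) (by norm_num) (by norm_num) := by
  unfold ptQ mkX015
  rw [Point.add_of_X_ne (by norm_num)]
  simp only [Point.some.injEq]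
  rw [slope_of_X_ne (by norm_num)]
  norm_num [addX, addY, negAddY, negY, X015]

/-- The Mordell–Weil group `X₀(15)(ℚ)` is isomorphic to `ℤ/2ℤ × ℤ/4ℤ`. -/
theorem mordellWeil_X015_rat :
    Nonempty (X015.toAffine.Point ≃+ (ZMod 2 × ZMod 4)) := by
  have h4 : (zmultiplesHom _ ptP) ((4 : ℕ) : ℤ) = 0 := by
    have : (4 : ℤ) • ptP = (ptP + ptP) + (ptP + ptP) := by abel
    simp only [zmultiplesHom_apply]
    push_cast
    rw [this, P_add_P, S_add_S]
  have h2 : (zmultiplesHom _ ptQ) ((2 : ℕ) : ℤ) = 0 := by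
    simp only [zmultiplesHom_apply]
    push_cast
    rw [two_zsmul, Q_add_Q]
  let f4 : ZMod 4 →+ X015.toAffine.Point := ZMod.lift 4 ⟨zmultiplesHom _ ptP, h4⟩
  let f2 : ZMod 2 →+ X015.toAffine.Point := ZMod.lift 2 ⟨zmultiplesHom _ ptQ, h2⟩
  have f41 : f4 1 = ptP := by
    have := ZMod.lift_coe 4 ⟨zmultiplesHom _ ptP, h4⟩ 1
    simpa using this
  have f21 : f2 1 = ptQ := by
    have := ZMod.lift_coe 2 ⟨zmultiplesHom _ ptQ, h2⟩ 1
    simpa using this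
  have f42 : f4 2 = ptS := by
    rw [show (2 : ZMod 4) = 1 + 1 from rfl, map_add, f41, P_add_P]
  have f43 : f4 3 = mkX015 (-2) (-2) (by norm_num) (by norm_num) := by
    rw [show (3 : ZMod 4) = 1 + 2 from rfl, map_add, f41, f42, P_add_S]
  let f := f2.coprod f4
  have g00 : f (0, 0) = 0 := by simp [f]
  have g01 : f (0, 1) = ptP := by simp [f, f41]
  have g02 : f (0, 2) = ptS := by simp [f, f42]
  have g03 : f (0, 3) = mkX015 (-2) (-2) (by norm_num) (by norm_num) := by simp [f, f43]
  have g10 : f (1, 0) = ptQ := by simp [f, f21]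
  have g11 : f (1, 1) = mkX015 8 18 (by norm_num) (by norm_num) := by simp [f, f21, f41, Q_add_P]
  have g12 : f (1, 2) = mkX015 (-13/4) (9/8) (by norm_num) (by norm_num) := by
    simp only [f, AddMonoidHom.coprod_apply, f21, f42, Q_add_S]
  have g13 : f (1, 3) = mkX015 8 (-27) (by norm_num) (by norm_num) := by
    simp only [f, AddMonoidHom.coprod_apply, f21, f43, Q_add_P3]
  have hne : ∀ x y h h', mkX015 x y h h' ≠ 0 := fun x y h h' =>
    WeierstrassCurve.Affine.Point.some_ne_zero _
  have inj : Function.Injective f := by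
    rw [injective_iff_map_eq_zero]
    have hall : ∀ a : ZMod 2 × ZMod 4, a = (0, 0) ∨ a = (0, 1) ∨ a = (0, 2) ∨ a = (0, 3) ∨
        a = (1, 0) ∨ a = (1, 1) ∨ a = (1, 2) ∨ a = (1, 3) := by decide
    intro a ha
    rcases hall a with rfl | rfl | rfl | rfl | rfl | rfl | rfl | rfl
    · rfl
    · rw [g01] at ha; exact absurd ha (hne _ _ _ _)
    · rw [g02] at ha; exact absurd ha (hne _ _ _ _)
    · rw [g03] at ha; exact absurd ha (hne _ _ _ _)
    · rw [g10] at ha; exact absurd ha (hne _ _ _ _)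
    · rw [g11] at ha; exact absurd ha (hne _ _ _ _)
    · rw [g12] at ha; exact absurd ha (hne _ _ _ _)
    · rw [g13] at ha; exact absurd ha (hne _ _ _ _)
  have surj : Function.Surjective f := by
    intro p
    rcases p with _ | ⟨x, y, hxy⟩
    · exact ⟨(0, 0), g00⟩
    · have he := hxy.1
      rw [WeierstrassCurve.Affine.equation_iff] at he
      simp only [X015] at he
      rcases curve_points x y (by linarith) with ⟨rfl, rfl⟩ | ⟨rfl, rfl⟩ | ⟨rfl, rfl⟩ |
        ⟨rfl, rfl⟩ | ⟨rfl, rfl⟩ | ⟨rfl, rfl⟩ | ⟨rfl, rfl⟩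
      · exact ⟨(1, 2), g12⟩
      · exact ⟨(1, 0), g10⟩
      · exact ⟨(0, 2), g02⟩
      · exact ⟨(0, 1), g01⟩
      · exact ⟨(0, 3), g03⟩
      · exact ⟨(1, 1), g11⟩
      · exact ⟨(1, 3), g13⟩
  exact ⟨(AddEquiv.ofBijective f ⟨inj, surj⟩).symm⟩
end

section
/- The Mordell–Weil group X₀(21)(ℚ) of ℚ-rational points of the elliptic curve X₀(21) is isomorphic, as an abelian group, to (ℤ/2ℤ) × (ℤ/4ℤ). -/
/-- `X₀(21)`: the elliptic curve over `ℚ` with Cremona label 21A1, given by the Weierstrass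
equation `y² + xy = x³ − 4x − 1`. -/
def X021 : WeierstrassCurve ℚ := ⟨1, 0, 0, -4, -1⟩


lemma int_pow_split {a b c : ℤ} {k : ℕ} (ha : 0 < a) (hb : 0 < b) (h : Int.gcd a b = 1)
    (hk : k ≠ 0) (habc : a * b = c ^ k) :
    ∃ x y : ℤ, 0 < x ∧ 0 < y ∧ a = x ^ k ∧ b = y ^ k ∧ Int.gcd x y = 1 := by
  have h1 : a.natAbs * b.natAbs = c.natAbs ^ k := by
    rw [← Int.natAbs_mul, habc, Int.natAbs_pow]
  have hu : IsUnit (gcd a.natAbs b.natAbs) := by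
    rw [Nat.isUnit_iff]; exact h
  obtain ⟨x, hx⟩ := exists_eq_pow_of_mul_eq_pow hu h1
  have hu' : IsUnit (gcd b.natAbs a.natAbs) := by
    rw [Nat.isUnit_iff]; rw [gcd_comm]; exact h
  obtain ⟨y, hy⟩ := exists_eq_pow_of_mul_eq_pow hu' (by rw [mul_comm]; exact h1)
  have hx' : a = (x : ℤ) ^ k := by
    rw [← Int.natAbs_of_nonneg ha.le, hx]; push_cast; rfl
  have hy' : b = (y : ℤ) ^ k := by
    rw [← Int.natAbs_of_nonneg hb.le, hy]; push_cast; rfl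
  refine ⟨x, y, ?_, ?_, hx', hy', ?_⟩
  · rcases Nat.eq_zero_or_pos x with rfl | h0
    · simp [hk] at hx'; omega
    · exact_mod_cast h0
  · rcases Nat.eq_zero_or_pos y with rfl | h0
    · simp [hk] at hy'; omega
    · exact_mod_cast h0
  · rw [Int.gcd_natCast_natCast]
    have : Nat.Coprime (x ^ k) (y ^ k) := by rw [← hx, ← hy]; exact h
    exact (Nat.coprime_pow_left_iff (Nat.pos_of_ne_zero hk) _ _).1
      ((Nat.coprime_pow_right_iff (Nat.pos_of_ne_zero hk) _ _).1 this)

/-- Splitting a square product when the gcd divides 3. -/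
lemma int_sq_split3 {a b c : ℤ} (ha : 0 < a) (hb : 0 < b) (h : Int.gcd a b ∣ 3)
    (habc : a * b = c ^ 2) :
    ∃ x y : ℤ, 0 < x ∧ 0 < y ∧ Int.gcd x y = 1 ∧
      ((a = x ^ 2 ∧ b = y ^ 2) ∨ (a = 3 * x ^ 2 ∧ b = 3 * y ^ 2)) := by
  rcases (Nat.dvd_prime Nat.prime_three).1 h with h1 | h3
  · obtain ⟨x, y, hx, hy, h1, h2, h3⟩ := int_pow_split ha hb h1 two_ne_zero habc
    exact ⟨x, y, hx, hy, h3, Or.inl ⟨h1, h2⟩⟩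
  · obtain ⟨a', b', hc, ha', hb'⟩ := Int.exists_gcd_one (m := a) (n := b) (by omega)
    rw [h3] at ha' hb'
    push_cast at ha' hb'
    subst ha' hb'
    have h3c : (3 : ℤ) ∣ c := by
      apply Int.prime_three.dvd_of_dvd_pow (n := 2)
      rw [← habc]; exact ⟨a' * (b' * 3), by ring⟩
    obtain ⟨c', rfl⟩ := h3c
    obtain ⟨x, y, hx, hy, h1, h2, h3⟩ := int_pow_split (a := a') (b := b') (c := c')
      (by omega) (by omega) hc two_ne_zero (by nlinarith)
    exact ⟨x, y, hx, hy, h3, Or.inr ⟨by rw [h1]; ring, by rw [h2]; ring⟩⟩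

lemma gcd_one_of_prime {a b : ℤ} (h : ∀ p : ℕ, p.Prime → (p : ℤ) ∣ a → (p : ℤ) ∣ b → False) :
    Int.gcd a b = 1 := by
  by_contra hne
  obtain ⟨p, hp, hpd⟩ := Nat.exists_prime_and_dvd hne
  have : (p : ℤ) ∣ (Int.gcd a b : ℤ) := by exact_mod_cast hpd
  exact h p hp (this.trans (Int.gcd_dvd_left ..)) (this.trans (Int.gcd_dvd_right ..))

lemma no_prime_of_gcd_one {a b : ℤ} (h : Int.gcd a b = 1) (p : ℕ) (hp : p.Prime)
    (ha : (p : ℤ) ∣ a) (hb : (p : ℤ) ∣ b) : False := by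
  have := Int.dvd_coe_gcd ha hb
  rw [h] at this
  have h2 : p ∣ 1 := by exact_mod_cast this
  exact hp.one_lt.ne' (Nat.dvd_one.1 h2)

/-- Descent step for the odd-odd case. -/
lemma stepB {m e n : ℤ} (hm : Odd m) (he : Odd e) (hc : Int.gcd m e = 1) (hne : m ^ 2 ≠ e ^ 2)
    (hn : 0 < n) (h : n ^ 2 = 4 * m ^ 4 + m ^ 2 * e ^ 2 + 4 * e ^ 4) :
    ∃ M E N : ℤ, Odd M ∧ Even E ∧ E ≠ 0 ∧ Int.gcd M E = 1 ∧ 0 < N ∧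
      N ^ 2 = M ^ 4 + M ^ 2 * E ^ 2 + 16 * E ^ 4 ∧ N ≤ n := by
  have hno : Odd n := by
    have : Odd (n ^ 2) := by
      obtain ⟨u, hu⟩ := (hm.pow (n := 2)).mul (he.pow (n := 2))
      exact ⟨2 * m ^ 4 + u + 2 * e ^ 4, by rw [h, hu]; ring⟩
    exact (Int.odd_pow' two_ne_zero).1 this
  obtain ⟨P, hP⟩ : Even (n - 3 * (m * e)) :=
    hno.sub_odd (Odd.mul (by decide) (hm.mul he))
  obtain ⟨Q, hQ⟩ : Even (n + 3 * (m * e)) :=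
    hno.add_odd (Odd.mul (by decide) (hm.mul he))
  have hPQ : P * Q = (m ^ 2 - e ^ 2) ^ 2 := by
    have : (P + P) * (Q + Q) = 4 * (m ^ 2 - e ^ 2) ^ 2 := by
      rw [← hP, ← hQ]; linear_combination h
    linarith
  have hpos : 0 < (m ^ 2 - e ^ 2) ^ 2 := by
    have : m ^ 2 - e ^ 2 ≠ 0 := sub_ne_zero.2 hne
    positivity
  have hPQs : P + Q = n := by linarith
  have hP0 : 0 < P := by
    by_contra hh
    have : 0 < Q := by linarith
    nlinarith
  have hQ0 : 0 < Q := by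
    by_contra hh
    nlinarith
  have hg : Int.gcd P Q ∣ 3 := by
    have d1 : (Int.gcd P Q : ℤ) ∣ P := Int.gcd_dvd_left ..
    have d2 : (Int.gcd P Q : ℤ) ∣ Q := Int.gcd_dvd_right ..
    have aux : ∀ p : ℕ, p.Prime → (p : ℤ) ∣ (Int.gcd P Q : ℤ) → (p : ℤ) ∣ m ^ 2 - e ^ 2 := by
      intro p hp hd
      apply (Nat.prime_iff_prime_int.1 hp).dvd_of_dvd_pow (n := 2)
      rw [← hPQ]; exact (hd.trans d1).mul_right _
    have c1 : Int.gcd (Int.gcd P Q : ℤ) m = 1 := by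
      apply gcd_one_of_prime
      intro p hp h1 h2
      apply no_prime_of_gcd_one hc p hp h2
      apply (Nat.prime_iff_prime_int.1 hp).dvd_of_dvd_pow (n := 2)
      have := dvd_sub (h2.mul_right m) (aux p hp h1)
      ring_nf at this; exact this
    have c2 : Int.gcd (Int.gcd P Q : ℤ) e = 1 := by
      apply gcd_one_of_prime
      intro p hp h1 h2
      refine no_prime_of_gcd_one hc p hp ?_ h2
      apply (Nat.prime_iff_prime_int.1 hp).dvd_of_dvd_pow (n := 2)
      have := dvd_add (h2.mul_right e) (aux p hp h1)
      ring_nf at this; exact this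
    have d3 : (Int.gcd P Q : ℤ) ∣ 3 * m * e := by
      have : 3 * m * e = Q - P := by linarith
      rw [this]; exact dvd_sub d2 d1
    have d4 := Int.dvd_of_dvd_mul_left_of_gcd_one d3 c2
    have d5 := Int.dvd_of_dvd_mul_left_of_gcd_one d4 c1
    exact_mod_cast d5
  obtain ⟨a, b, ha, hb, hab, hcase⟩ := int_sq_split3 hP0 hQ0 hg hPQ
  -- a common conclusion
  have key : ∃ c : ℤ, 0 < c ∧ c ^ 2 = 4 * b ^ 4 + a ^ 2 * b ^ 2 + 4 * a ^ 4 ∧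
      c ≤ 2 * n ∧ Odd (b ^ 2 - a ^ 2) := by
    have hbd : 3 * (m ^ 2 + e ^ 2) ≤ 2 * n := by
      apply le_of_sq_le_sq _ (by linarith)
      nlinarith [sq_nonneg (m ^ 2 - e ^ 2)]
    have hme : 0 < m ^ 2 + e ^ 2 := by
      have : m ≠ 0 := by rintro rfl; simp at hm
      positivity
    have hodd : Odd (m * e) := hm.mul he
    rcases hcase with ⟨h1, h2⟩ | ⟨h1, h2⟩
    · have e1 : b ^ 2 - a ^ 2 = 3 * (m * e) := by linarith
      have e2 : a ^ 2 * b ^ 2 = (m ^ 2 - e ^ 2) ^ 2 := by rw [← h1, ← h2, hPQ]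
      refine ⟨3 * (m ^ 2 + e ^ 2), by linarith, ?_, hbd, ?_⟩
      · linear_combination (-9) * e2 - 4 * (b ^ 2 - a ^ 2 + 3 * (m * e)) * e1
      · rw [e1]; exact Odd.mul (by decide) hodd
    · have e1 : b ^ 2 - a ^ 2 = m * e := by linarith
      have e2 : 9 * (a ^ 2 * b ^ 2) = (m ^ 2 - e ^ 2) ^ 2 := by
        rw [← hPQ, h1, h2]; ring
      refine ⟨(m ^ 2 + e ^ 2), by linarith, ?_, by linarith, ?_⟩
      · linear_combination (-1) * e2 - 4 * (b ^ 2 - a ^ 2 + (m * e)) * e1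
      · rw [e1]; exact hodd
  obtain ⟨c, hc0, hcq, hcn, hpar⟩ := key
  -- symmetric finishing step
  have fin : ∀ a b : ℤ, Odd a → Even b → 0 < b → Int.gcd a b = 1 →
      c ^ 2 = 4 * b ^ 4 + a ^ 2 * b ^ 2 + 4 * a ^ 4 →
      ∃ M E N : ℤ, Odd M ∧ Even E ∧ E ≠ 0 ∧ Int.gcd M E = 1 ∧ 0 < N ∧
      N ^ 2 = M ^ 4 + M ^ 2 * E ^ 2 + 16 * E ^ 4 ∧ N ≤ n := by
    intro a b ha hb hb0 hab hcq
    obtain ⟨E, hE⟩ := hb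
    have hce : Even c := by
      have : Even (c ^ 2) := by
        rw [hcq, hE]; exact ⟨32 * E ^ 4 + 2 * a ^ 2 * E ^ 2 + 2 * a ^ 4, by ring⟩
      exact (Int.even_pow' two_ne_zero).1 this
    obtain ⟨N, hN⟩ := hce
    subst hE hN
    have hq : N ^ 2 = a ^ 4 + a ^ 2 * E ^ 2 + 16 * E ^ 4 := by linarith
    refine ⟨a, E, N, ha, ?_, by omega, ?_, by omega, hq, by omega⟩
    · by_contra hodd
      rw [Int.not_even_iff_odd] at hodd
      have h4 : N ^ 2 % 4 = 2 := by
        rw [hq]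
        have i1 := Int.sq_mod_four_eq_one_of_odd ha
        have i2 := Int.sq_mod_four_eq_one_of_odd hodd
        have : a ^ 4 + a ^ 2 * E ^ 2 + 16 * E ^ 4 = a ^ 2 * a ^ 2 + a ^ 2 * E ^ 2 + 16 * E ^ 4 := by ring
        rw [this]
        simp [Int.add_emod, Int.mul_emod, i1, i2]
      rcases Int.even_or_odd N with hN | hN
      · obtain ⟨w, rfl⟩ := hN
        ring_nf at h4; omega
      · have := Int.sq_mod_four_eq_one_of_odd hN; omega
    · apply gcd_one_of_prime
      intro p hp h1 h2
      exact no_prime_of_gcd_one hab p hp h1 (dvd_add h2 h2)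
  rcases Int.even_or_odd a with hae | hao
  · have hbo : Odd b := by
      simp [parity_simps, hae] at hpar; exact hpar
    exact fin b a hbo hae ha (by rw [Int.gcd_comm]; exact hab) (by rw [hcq]; ring)
  · have hbe : Even b := by
      rcases Int.even_or_odd b with h | h
      · exact h
      · exact absurd ((h.pow (n := 2)).sub_odd (hao.pow (n := 2))) (Int.not_even_iff_odd.2 hpar)
    exact fin a b hao hbe hb hab hcq

lemma sq_mod8 {M : ℤ} (hM : Odd M) : (8 : ℤ) ∣ M ^ 2 - 1 := by
  obtain ⟨t, rfl⟩ := hM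
  obtain ⟨u, hu⟩ := Int.even_mul_succ_self t
  exact ⟨u, by linear_combination 4 * hu⟩

lemma parity_of_sq {s r p c : ℤ} (hpar : Odd (s + r)) (h : p ^ 2 = s ^ 2 - r ^ 2 - 4 * (c * r ^ 2)) :
    Odd s ∧ Even r := by
  rcases Int.even_or_odd s with hs | hs
  · exfalso
    have hr : Odd r := by
      by_contra hh
      exact (Int.not_even_iff_odd.2 hpar) (hs.add (Int.not_odd_iff_even.1 hh))
    have h1 := sq_mod8 hr
    generalize c * r ^ 2 = d at h
    obtain ⟨a, rfl⟩ := hs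
    have h2 : (a + a) ^ 2 = 4 * a ^ 2 := by ring
    rcases Int.even_or_odd p with hp | hp
    · obtain ⟨b, rfl⟩ := hp
      have h3 : (b + b) ^ 2 = 4 * b ^ 2 := by ring
      omega
    · have := sq_mod8 hp
      omega
  · refine ⟨hs, ?_⟩
    by_contra hh
    exact (Int.not_even_iff_odd.2 hpar) (hs.add_odd (Int.not_even_iff_odd.1 hh))

lemma prime_dvd_helper {s r : ℤ} (hc : Int.gcd s r = 1) {x : ℤ} (hx : Odd x) (p : ℕ) (hp : p.Prime)
    (h0 : (p : ℤ) ∣ x) (h1 : (p : ℤ) ∣ 16 * s ^ 2) (h2 : (p : ℤ) ∣ 16 * r ^ 2) : False := by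
  have hpi := Nat.prime_iff_prime_int.1 hp
  have hn : ¬ (p : ℤ) ∣ 16 := by
    intro h
    have h' : (p : ℤ) ∣ 2 := hpi.dvd_of_dvd_pow (n := 4) (by simpa using h)
    have h3 : p = 2 := (Nat.prime_dvd_prime_iff_eq hp Nat.prime_two).1 (by exact_mod_cast h')
    subst h3
    have := even_iff_two_dvd.2 h0
    exact (Int.not_even_iff_odd.2 hx) this
  exact no_prime_of_gcd_one hc p hp (hpi.dvd_of_dvd_pow ((hpi.dvd_or_dvd h1).resolve_left hn))
    (hpi.dvd_of_dvd_pow ((hpi.dvd_or_dvd h2).resolve_left hn))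

lemma stepA9 {s r M : ℤ} (hs : 0 < s) (hr : 0 < r) (hpar : Odd (s + r))
    (hc : Int.gcd s r = 1) (hM0 : M ≠ 0) (h : M ^ 2 = (s ^ 2 - r ^ 2) * (9 * s ^ 2 + 7 * r ^ 2)) :
    ∃ f g n : ℤ, Odd f ∧ Odd g ∧ Int.gcd f g = 1 ∧ f ^ 2 ≠ g ^ 2 ∧ 0 < n ∧
      n ^ 2 = 4 * f ^ 4 + f ^ 2 * g ^ 2 + 4 * g ^ 4 ∧ n ^ 2 ≤ 9 * M ^ 2 := by
  have hM2 : 0 < M ^ 2 := by positivity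
  have h9 : 0 < 9 * s ^ 2 + 7 * r ^ 2 := by positivity
  have h1 : 0 < s ^ 2 - r ^ 2 := by
    by_contra hh
    nlinarith
  have hsr : r < s := by nlinarith
  have hodd : Odd (s ^ 2 - r ^ 2) := by
    obtain ⟨u, hu⟩ := hpar.pow (n := 2)
    exact ⟨u - r ^ 2 - s * r, by linear_combination hu⟩
  have hg : Int.gcd (s ^ 2 - r ^ 2) (9 * s ^ 2 + 7 * r ^ 2) = 1 := by
    apply gcd_one_of_prime
    intro p hp d1 d2
    refine prime_dvd_helper hc hodd p hp d1 ?_ ?_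
    · have := dvd_add (d1.mul_left 7) d2
      ring_nf at this ⊢; exact this
    · have := dvd_sub d2 (d1.mul_left 9)
      ring_nf at this ⊢; exact this
  obtain ⟨p, q, hp, hq, hp2, hq2, -⟩ := int_pow_split h1 h9 hg two_ne_zero h.symm
  obtain ⟨hso, hre⟩ := parity_of_sq hpar (c := 0) (p := p) (by linarith)
  have hodd1 : Odd (s - r) := hso.sub_even hre
  have hodd2 : Odd (s + r) := hso.add_even hre
  have hg2 : Int.gcd (s - r) (s + r) = 1 := by
    apply gcd_one_of_prime
    intro p hp d1 d2
    refine prime_dvd_helper hc hodd1 p hp d1 ?_ ?_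
    · have := (dvd_add d1 d2).mul_right (8 * s)
      ring_nf at this ⊢; exact this
    · have := (dvd_sub d2 d1).mul_right (8 * r)
      ring_nf at this ⊢; exact this
  obtain ⟨f, g, hf, hg, hf2, hg2, hfg⟩ := int_pow_split (c := p) (by linarith) (by linarith) hg2
    two_ne_zero (by rw [← hp2]; ring)
  refine ⟨f, g, q, ?_, ?_, hfg, by intro hh; linarith, hq, ?_, ?_⟩
  · rw [hf2] at hodd1; exact (Int.odd_pow' two_ne_zero).1 hodd1
  · rw [hg2] at hodd2; exact (Int.odd_pow' two_ne_zero).1 hodd2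
  · have e1 : 2 * s = f ^ 2 + g ^ 2 := by linarith
    have e2 : 2 * r = g ^ 2 - f ^ 2 := by linarith
    have : 4 * q ^ 2 = 4 * (4 * f ^ 4 + f ^ 2 * g ^ 2 + 4 * g ^ 4) := by
      rw [← hq2]
      linear_combination 9 * (2 * s + f ^ 2 + g ^ 2) * e1 + 7 * (2 * r + g ^ 2 - f ^ 2) * e2
    linarith
  · rw [h, hp2, hq2]
    have : 0 < p ^ 2 := by positivity
    have : 0 < q ^ 2 := by positivity
    nlinarith

lemma stepA1 {s r M : ℤ} (hs : 0 < s) (hr : 0 < r) (hpar : Odd (s + r))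
    (hc : Int.gcd s r = 1) (hM0 : M ≠ 0) (h : M ^ 2 = (s ^ 2 - 9 * r ^ 2) * (s ^ 2 + 7 * r ^ 2)) :
    ∃ f g n : ℤ, Odd f ∧ Odd g ∧ Int.gcd f g = 1 ∧ f ^ 2 ≠ g ^ 2 ∧ 0 < n ∧
      n ^ 2 = 4 * f ^ 4 + f ^ 2 * g ^ 2 + 4 * g ^ 4 ∧ n ^ 2 ≤ 9 * M ^ 2 := by
  have hM2 : 0 < M ^ 2 := by positivity
  have h9 : 0 < s ^ 2 + 7 * r ^ 2 := by positivity
  have h1 : 0 < s ^ 2 - 9 * r ^ 2 := by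
    by_contra hh
    nlinarith
  have hsr : 3 * r < s := by nlinarith
  have hodd : Odd (s ^ 2 - 9 * r ^ 2) := by
    obtain ⟨u, hu⟩ := hpar.pow (n := 2)
    exact ⟨u - 5 * r ^ 2 - s * r, by linear_combination hu⟩
  have hg : Int.gcd (s ^ 2 - 9 * r ^ 2) (s ^ 2 + 7 * r ^ 2) = 1 := by
    apply gcd_one_of_prime
    intro p hp d1 d2
    refine prime_dvd_helper hc hodd p hp d1 ?_ ?_
    · have := dvd_add (d1.mul_left 7) (d2.mul_left 9)
      ring_nf at this ⊢; exact this
    · have := dvd_sub d2 d1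
      ring_nf at this ⊢; exact this
  obtain ⟨p, q, hp, hq, hp2, hq2, -⟩ := int_pow_split h1 h9 hg two_ne_zero h.symm
  obtain ⟨hso, hre⟩ := parity_of_sq hpar (c := 2) (p := p) (by linarith)
  have hr3 : Even (3 * r) := hre.mul_left 3
  have hodd1 : Odd (s - 3 * r) := hso.sub_even hr3
  have hodd2 : Odd (s + 3 * r) := hso.add_even hr3
  have hg2 : Int.gcd (s - 3 * r) (s + 3 * r) ∣ 3 := by
    have d1 : (Int.gcd (s - 3 * r) (s + 3 * r) : ℤ) ∣ s - 3 * r := Int.gcd_dvd_left ..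
    have d2 : (Int.gcd (s - 3 * r) (s + 3 * r) : ℤ) ∣ s + 3 * r := Int.gcd_dvd_right ..
    generalize Int.gcd (s - 3 * r) (s + 3 * r) = d at d1 d2
    have c2 : Int.gcd (d : ℤ) 2 = 1 := by
      apply gcd_one_of_prime
      intro p hp i1 i2
      have h3 : p = 2 := (Nat.prime_dvd_prime_iff_eq hp Nat.prime_two).1 (by exact_mod_cast i2)
      subst h3
      exact (Int.not_even_iff_odd.2 hodd1) (even_iff_two_dvd.2 (i1.trans d1))
    have ds : (d : ℤ) ∣ s := by
      have : (d : ℤ) ∣ s * 2 := by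
        have := dvd_add d1 d2
        ring_nf at this ⊢; exact this
      exact Int.dvd_of_dvd_mul_left_of_gcd_one this c2
    have dr : (d : ℤ) ∣ 3 * r := by
      have := dvd_sub d2 ds
      ring_nf at this ⊢; exact this
    have c3 : Int.gcd (d : ℤ) r = 1 := by
      apply gcd_one_of_prime
      intro p hp i1 i2
      exact no_prime_of_gcd_one hc p hp (i1.trans ds) i2
    exact_mod_cast Int.dvd_of_dvd_mul_left_of_gcd_one dr c3
  obtain ⟨f, g, hf, hg, hfg, hcase⟩ := int_sq_split3 (c := p) (by linarith) (by linarith) hg2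
    (by rw [← hp2]; ring)
  have hp1 : 0 < p ^ 2 := by positivity
  have hq1 : 0 < q ^ 2 := by positivity
  rcases hcase with ⟨hf2, hg2⟩ | ⟨hf2, hg2⟩
  · refine ⟨f, g, 3 * q, ?_, ?_, hfg, by intro hh; linarith, by linarith, ?_, ?_⟩
    · rw [hf2] at hodd1; exact (Int.odd_pow' two_ne_zero).1 hodd1
    · rw [hg2] at hodd2; exact (Int.odd_pow' two_ne_zero).1 hodd2
    · have e1 : 2 * s = f ^ 2 + g ^ 2 := by linarith
      have e2 : 6 * r = g ^ 2 - f ^ 2 := by linarith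
      have : 36 * q ^ 2 = 4 * (4 * f ^ 4 + f ^ 2 * g ^ 2 + 4 * g ^ 4) := by
        rw [← hq2]
        linear_combination 9 * (2 * s + f ^ 2 + g ^ 2) * e1 + 7 * (6 * r + g ^ 2 - f ^ 2) * e2
      linarith
    · rw [h, hp2, hq2]
      nlinarith
  · refine ⟨f, g, q, ?_, ?_, hfg, by intro hh; linarith, by linarith, ?_, ?_⟩
    · rw [hf2] at hodd1
      exact (Int.odd_pow' two_ne_zero).1 (Int.odd_mul.1 hodd1).2
    · rw [hg2] at hodd2
      exact (Int.odd_pow' two_ne_zero).1 (Int.odd_mul.1 hodd2).2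
    · have e1 : 2 * s = 3 * (f ^ 2 + g ^ 2) := by linarith
      have e2 : 2 * r = g ^ 2 - f ^ 2 := by linarith
      have : 4 * q ^ 2 = 4 * (4 * f ^ 4 + f ^ 2 * g ^ 2 + 4 * g ^ 4) := by
        rw [← hq2]
        linear_combination (2 * s + 3 * (f ^ 2 + g ^ 2)) * e1 + 7 * (2 * r + g ^ 2 - f ^ 2) * e2
      linarith
    · rw [h, hp2, hq2]
      nlinarith

lemma prime_pow_split {P Q : ℤ} (h : Int.gcd P Q = 1) (p j : ℕ) (hp : p.Prime)
    (hd : ((p : ℤ) ^ j) ∣ P * Q) : ((p : ℤ) ^ j) ∣ P ∨ ((p : ℤ) ^ j) ∣ Q := by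
  by_cases hP : (p : ℤ) ∣ P
  · left
    refine Int.dvd_of_dvd_mul_left_of_gcd_one hd ?_
    apply gcd_one_of_prime
    intro q hq h1 h2
    have h3 := (Nat.prime_iff_prime_int.1 hq).dvd_of_dvd_pow h1
    have : q = p := (Nat.prime_dvd_prime_iff_eq hq hp).1 (by exact_mod_cast h3)
    subst this
    exact no_prime_of_gcd_one h q hq hP h2
  · right
    refine Int.dvd_of_dvd_mul_right_of_gcd_one hd ?_
    apply gcd_one_of_prime
    intro q hq h1 h2
    have h3 := (Nat.prime_iff_prime_int.1 hq).dvd_of_dvd_pow h1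
    have : q = p := (Nat.prime_dvd_prime_iff_eq hq hp).1 (by exact_mod_cast h3)
    subst this
    exact hP h2

lemma gcd_factor {a b x y : ℤ} (h : Int.gcd (a * x) (b * y) = 1) : Int.gcd x y = 1 := by
  apply gcd_one_of_prime
  intro p hp h1 h2
  exact no_prime_of_gcd_one h p hp (h1.mul_left a) (h2.mul_left b)

/-- The possible shapes of a factorization `P * Q = 63 * k ^ 4` with `gcd P Q ∣ 3`. -/
lemma split63 {P Q k : ℤ} (hP : 0 < P) (hQ : 0 < Q) (hg : Int.gcd P Q ∣ 3)
    (h : P * Q = 63 * k ^ 4) (hk3 : Int.gcd P Q = 3 → ¬ (3 : ℤ) ∣ k) :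
    ∃ A B s r : ℤ, 0 < s ∧ 0 < r ∧ Int.gcd s r = 1 ∧ Q = A * s ^ 4 ∧ P = B * r ^ 4 ∧
      s ^ 2 * r ^ 2 = k ^ 2 ∧
      ((A = 1 ∧ B = 63) ∨ (A = 9 ∧ B = 7) ∨ (A = 63 ∧ B = 1) ∨ (A = 7 ∧ B = 9) ∨
        (A = 3 ∧ B = 21) ∨ (A = 21 ∧ B = 3)) := by
  have main : ∀ A B x y : ℤ, 0 < A → 0 < B → Q = A * x → P = B * y → A * B = 63 →
      Int.gcd x y = 1 → ∃ s r : ℤ, 0 < s ∧ 0 < r ∧ Int.gcd s r = 1 ∧ Q = A * s ^ 4 ∧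
        P = B * r ^ 4 ∧ s ^ 2 * r ^ 2 = k ^ 2 := by
    intro A B x y hA hB hx hy hAB hxy
    have hx0 : 0 < x := by rw [hx] at hQ; exact pos_of_mul_pos_right hQ hA.le
    have hy0 : 0 < y := by rw [hy] at hP; exact pos_of_mul_pos_right hP hB.le
    have hk : x * y = k ^ 4 := by
      have : 63 * (x * y) = 63 * k ^ 4 := by
        rw [← h, hx, hy, ← hAB]; ring
      linarith
    obtain ⟨s, r, hs, hr, h1, h2, h3⟩ := int_pow_split hx0 hy0 hxy (by norm_num : (4 : ℕ) ≠ 0) hk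
    refine ⟨s, r, hs, hr, h3, by rw [hx, h1], by rw [hy, h2], ?_⟩
    have : (s ^ 2 * r ^ 2) ^ 2 = (k ^ 2) ^ 2 := by
      have : (s ^ 2 * r ^ 2) ^ 2 = s ^ 4 * r ^ 4 := by ring
      rw [this, ← h1, ← h2, hk]; ring
    exact (pow_left_inj₀ (by positivity) (by positivity) two_ne_zero).1 this
  rcases (Nat.dvd_prime Nat.prime_three).1 hg with h1 | h3
  · have h9 := prime_pow_split h1 3 2 Nat.prime_three (by rw [h]; exact ⟨7 * k ^ 4, by push_cast; ring⟩)
    have h7 := prime_pow_split h1 7 1 (by norm_num) (by rw [h]; exact ⟨9 * k ^ 4, by push_cast; ring⟩)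
    norm_num at h9 h7
    have c97 : ∀ z : ℤ, 9 ∣ z → 7 ∣ z → 63 ∣ z := by intro z _ _; omega
    rcases h9 with h9 | h9 <;> rcases h7 with h7 | h7
    · obtain ⟨y, hy⟩ := c97 _ h9 h7
      obtain ⟨s, r, hh⟩ := main 1 63 Q y (by norm_num) (by norm_num) (by ring) hy (by norm_num)
        (by rw [Int.gcd_comm]; exact gcd_factor (a := 63) (b := 1) (by rw [← hy, one_mul]; exact h1))
      exact ⟨1, 63, s, r, by tauto⟩
    · obtain ⟨y, hy⟩ := h9
      obtain ⟨x, hx⟩ := h7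
      obtain ⟨s, r, hh⟩ := main 7 9 x y (by norm_num) (by norm_num) hx hy (by norm_num)
        (by rw [Int.gcd_comm]; exact gcd_factor (a := 9) (b := 7) (by rw [← hy, ← hx]; exact h1))
      exact ⟨7, 9, s, r, by tauto⟩
    · obtain ⟨y, hy⟩ := h7
      obtain ⟨x, hx⟩ := h9
      obtain ⟨s, r, hh⟩ := main 9 7 x y (by norm_num) (by norm_num) hx hy (by norm_num)
        (by rw [Int.gcd_comm]; exact gcd_factor (a := 7) (b := 9) (by rw [← hy, ← hx]; exact h1))
      exact ⟨9, 7, s, r, by tauto⟩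
    · obtain ⟨x, hx⟩ := c97 _ h9 h7
      obtain ⟨s, r, hh⟩ := main 63 1 x P (by norm_num) (by norm_num) hx (by ring) (by norm_num)
        (by rw [Int.gcd_comm]; exact gcd_factor (a := 1) (b := 63) (by rw [← hx, one_mul]; exact h1))
      exact ⟨63, 1, s, r, by tauto⟩
  · obtain ⟨y, x, hc, hy, hx⟩ := Int.exists_gcd_one (m := P) (n := Q) (by omega)
    rw [h3] at hx hy
    push_cast at hx hy
    have h7 := prime_pow_split hc 7 1 (by norm_num) (by
      refine ⟨k ^ 4, ?_⟩
      rw [hx, hy] at h; push_cast; linarith)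
    norm_num at h7
    rcases h7 with ⟨z, hz⟩ | ⟨z, hz⟩
    · obtain ⟨s, r, hh⟩ := main 3 21 x z (by norm_num) (by norm_num) (by linarith) (by linarith)
        (by norm_num) (by
          rw [Int.gcd_comm]; exact gcd_factor (a := 7) (b := 1) (by rw [← hz, one_mul]; exact hc))
      exact ⟨3, 21, s, r, by tauto⟩
    · obtain ⟨s, r, hh⟩ := main 21 3 z y (by norm_num) (by norm_num) (by linarith) (by linarith)
        (by norm_num) (by
          rw [Int.gcd_comm]; exact gcd_factor (a := 1) (b := 7) (by rw [← hz, one_mul]; exact hc))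
      exact ⟨21, 3, s, r, by tauto⟩

lemma mod8_odd {M : ℤ} (hM : Odd M) : ((M : ZMod 8)) ^ 2 = 1 := by
  have h := sq_mod8 hM
  have := (ZMod.intCast_zmod_eq_zero_iff_dvd (M ^ 2 - 1) 8).2 (by exact_mod_cast h)
  push_cast at this
  exact sub_eq_zero.1 this

lemma stepA {M E N : ℤ} (hM : Odd M) (hE : Even E) (hE0 : E ≠ 0) (hc : Int.gcd M E = 1)
    (hN : 0 < N) (h : N ^ 2 = M ^ 4 + M ^ 2 * E ^ 2 + 16 * E ^ 4) :
    ∃ f g n : ℤ, Odd f ∧ Odd g ∧ Int.gcd f g = 1 ∧ f ^ 2 ≠ g ^ 2 ∧ 0 < n ∧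
      n ^ 2 = 4 * f ^ 4 + f ^ 2 * g ^ 2 + 4 * g ^ 4 ∧ n ^ 2 ≤ 9 * M ^ 2 := by
  obtain ⟨k, rfl⟩ := hE
  have hk0 : k ≠ 0 := by rintro rfl; simp at hE0
  have hM0 : M ≠ 0 := by rintro rfl; simp at hM
  have hNo : Odd N := by
    have : Odd (N ^ 2) := by
      obtain ⟨u, hu⟩ := hM.pow (n := 4)
      exact ⟨u + 2 * M ^ 2 * k ^ 2 + 128 * k ^ 4, by rw [h, hu]; ring⟩
    exact (Int.odd_pow' two_ne_zero).1 this
  obtain ⟨P', hP'⟩ : Even (N - M ^ 2) := hNo.sub_odd hM.pow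
  obtain ⟨Q', hQ'⟩ : Even (N + M ^ 2) := hNo.add_odd hM.pow
  obtain ⟨P, hP⟩ : ∃ P, P = P' - k ^ 2 := ⟨_, rfl⟩
  obtain ⟨Q, hQ⟩ : ∃ Q, Q = Q' + k ^ 2 := ⟨_, rfl⟩
  have hdiff : Q - P = M ^ 2 + 2 * k ^ 2 := by linarith
  have hsum : P + Q = N := by linarith
  have hPQ : P * Q = 63 * k ^ 4 := by
    have : (P + Q) ^ 2 - (Q - P) ^ 2 = 252 * k ^ 4 := by
      rw [hsum, hdiff, h]; ring
    linarith
  have hk4 : 0 < k ^ 4 := by positivity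
  have hP0 : 0 < P := by
    by_contra hh
    have : 0 < Q := by linarith
    nlinarith
  have hQ0 : 0 < Q := by
    by_contra hh
    nlinarith
  have d1 : (Int.gcd P Q : ℤ) ∣ P := Int.gcd_dvd_left ..
  have d2 : (Int.gcd P Q : ℤ) ∣ Q := Int.gcd_dvd_right ..
  have ck : Int.gcd (Int.gcd P Q : ℤ) k = 1 := by
    apply gcd_one_of_prime
    intro p hp h1 h2
    refine no_prime_of_gcd_one hc p hp ?_ (dvd_add h2 h2)
    apply (Nat.prime_iff_prime_int.1 hp).dvd_of_dvd_pow (n := 2)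
    have i1 : (p : ℤ) ∣ M ^ 2 + 2 * k ^ 2 := hdiff ▸ dvd_sub (h1.trans d2) (h1.trans d1)
    have := dvd_sub i1 (h2.mul_right (2 * k))
    ring_nf at this ⊢; exact this
  have hg : Int.gcd P Q ∣ 3 := by
    have i1 : (Int.gcd P Q : ℤ) * (Int.gcd P Q : ℤ) ∣ 63 * k ^ 4 := hPQ ▸ mul_dvd_mul d1 d2
    generalize Int.gcd P Q = d at *
    have c4 : Int.gcd ((d : ℤ) * d) (k ^ 4) = 1 := by
      apply gcd_one_of_prime
      intro p hp h1 h2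
      have hpi := Nat.prime_iff_prime_int.1 hp
      refine no_prime_of_gcd_one ck p hp ?_ (hpi.dvd_of_dvd_pow h2)
      rcases hpi.dvd_or_dvd h1 with h | h <;> exact h
    have i2 := Int.dvd_of_dvd_mul_left_of_gcd_one i1 c4
    have i3 : d * d ∣ 63 := by exact_mod_cast i2
    have : d * d ≤ 63 := Nat.le_of_dvd (by norm_num) i3
    have : d ≤ 7 := by nlinarith
    interval_cases d <;> revert i3 <;> decide
  obtain ⟨A, B, s, r, hs, hr, hsr, hQs, hPr, hk, hcases⟩ := split63 hP0 hQ0 hg hPQ (by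
    intro h3 h4
    rw [h3] at ck
    exact no_prime_of_gcd_one ck 3 Nat.prime_three (by norm_num) (by exact_mod_cast h4))
  have hMeq : M ^ 2 = A * s ^ 4 - 2 * (s ^ 2 * r ^ 2) - B * r ^ 4 := by
    rw [hk, ← hQs, ← hPr]; linarith
  have h8 : (A : ZMod 8) * (s : ZMod 8) ^ 4 - 2 * ((s : ZMod 8) ^ 2 * (r : ZMod 8) ^ 2)
      - (B : ZMod 8) * (r : ZMod 8) ^ 4 = 1 := by
    rw [← mod8_odd hM]
    have := congrArg (fun z : ℤ => (z : ZMod 8)) hMeq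
    push_cast at this
    exact this.symm
  have hpar : Odd A → Odd B → Odd (s + r) := by
    rintro ⟨a, rfl⟩ ⟨b, rfl⟩
    by_contra hh
    obtain ⟨v, hv⟩ := Int.not_odd_iff_even.1 hh
    have he : Even (M ^ 2) := by
      obtain rfl : s = v + v - r := by linarith
      rw [hMeq]
      exact ⟨a * (v + v - r) ^ 4 + 8 * v ^ 4 - 16 * v ^ 3 * r + 12 * v ^ 2 * r ^ 2 - 4 * v * r ^ 3
        - ((v + v - r) ^ 2 * r ^ 2) - b * r ^ 4, by ring⟩
    exact (Int.not_even_iff_odd.2 hM.pow) he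
  rcases hcases with ⟨rfl, rfl⟩ | ⟨rfl, rfl⟩ | ⟨rfl, rfl⟩ | ⟨rfl, rfl⟩ | ⟨rfl, rfl⟩ | ⟨rfl, rfl⟩
  · exact stepA1 hs hr (hpar (by decide) (by decide)) hsr hM0 (by rw [hMeq]; ring)
  · exact stepA9 hs hr (hpar (by decide) (by decide)) hsr hM0 (by rw [hMeq]; ring)
  all_goals
    exfalso
    push_cast at h8
    revert h8
    generalize (s : ZMod 8) = s
    generalize (r : ZMod 8) = r
    revert s r
    decide

lemma noA (K : ℕ) : ∀ {M E N : ℤ}, N.toNat ≤ K → Odd M → Even E → E ≠ 0 → Int.gcd M E = 1 → 0 < N →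
    N ^ 2 = M ^ 4 + M ^ 2 * E ^ 2 + 16 * E ^ 4 → False := by
  induction K with
  | zero => intro M E N h0 _ _ _ _ hN _; omega
  | succ K ih =>
    intro M E N hK hM hE hE0 hc hN h
    obtain ⟨f, g, n, hf, hg, hfg, hne, hn, hn2, hnM⟩ := stepA hM hE hE0 hc hN h
    obtain ⟨M', E', N', hM', hE', hE0', hc', hN', h', hle⟩ := stepB hf hg hfg hne hn hn2
    refine ih (N := N') ?_ hM' hE' hE0' hc' hN' h'
    have hEsq : 4 ≤ E ^ 2 := by
      obtain ⟨k, rfl⟩ := hE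
      have : k ≠ 0 := by rintro rfl; simp at hE0
      have : 0 < k ^ 2 := by positivity
      nlinarith
    have hMN : M ^ 2 ≤ N := by
      apply le_of_sq_le_sq _ hN.le
      nlinarith [sq_nonneg (M * E), sq_nonneg (E ^ 2)]
    have hN16 : 16 ≤ N := by
      apply le_of_sq_le_sq _ hN.le
      nlinarith [sq_nonneg (M * E), sq_nonneg (M ^ 2)]
    have : N' < N := by
      apply lt_of_pow_lt_pow_left₀ 2 hN.le
      nlinarith
    omega

lemma noB {m e n : ℤ} (hm : Odd m) (he : Odd e) (hc : Int.gcd m e = 1)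
    (hn : 0 < n) (h : n ^ 2 = 4 * m ^ 4 + m ^ 2 * e ^ 2 + 4 * e ^ 4) : m ^ 2 = e ^ 2 := by
  by_contra hne
  obtain ⟨M', E', N', hM', hE', hE0', hc', hN', h', hle⟩ := stepB hm he hc hne hn h
  exact noA _ le_rfl hM' hE' hE0' hc' hN' h'

lemma odd_odd_false {M E N : ℤ} (hM : Odd M) (hE : Odd E)
    (h : N ^ 2 = M ^ 4 + M ^ 2 * E ^ 2 + 16 * E ^ 4) : False := by
  have i1 := sq_mod8 (hM.pow (n := 2))
  have i2 := sq_mod8 (hM.mul hE)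
  have e1 : (M ^ 2) ^ 2 = M ^ 4 := by ring
  have e2 : (M * E) ^ 2 = M ^ 2 * E ^ 2 := by ring
  rcases Int.even_or_odd N with ⟨b, rfl⟩ | hp
  · have h3 : (b + b) ^ 2 = 4 * b ^ 2 := by ring
    omega
  · have := sq_mod8 hp
    omega

lemma int_quartic {M E N : ℤ} (hM0 : M ≠ 0) (hE0 : E ≠ 0) (hc : Int.gcd M E = 1)
    (hN : 0 < N) (h : N ^ 2 = M ^ 4 + M ^ 2 * E ^ 2 + 16 * E ^ 4) : M ^ 2 = 4 * E ^ 2 := by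
  rcases Int.even_or_odd M with hM | hM
  · have hE : Odd E := by
      by_contra hh
      exact no_prime_of_gcd_one hc 2 Nat.prime_two (even_iff_two_dvd.1 hM)
        (even_iff_two_dvd.1 (Int.not_odd_iff_even.1 hh))
    obtain ⟨m, rfl⟩ := hM
    have hN2 : Even N := by
      have : Even (N ^ 2) := by
        rw [h]; exact ⟨8 * m ^ 4 + 2 * m ^ 2 * E ^ 2 + 8 * E ^ 4, by ring⟩
      exact (Int.even_pow' two_ne_zero).1 this
    obtain ⟨n, rfl⟩ := hN2
    have hn : n ^ 2 = 4 * m ^ 4 + m ^ 2 * E ^ 2 + 4 * E ^ 4 := by linarith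
    have hmE : Int.gcd m E = 1 := by
      apply gcd_one_of_prime
      intro p hp h1 h2
      exact no_prime_of_gcd_one hc p hp (dvd_add h1 h1) h2
    rcases Int.even_or_odd m with hm | hm
    · exfalso
      obtain ⟨l, rfl⟩ := hm
      have hn2 : Even n := by
        have : Even (n ^ 2) := by
          rw [hn]; exact ⟨32 * l ^ 4 + 2 * l ^ 2 * E ^ 2 + 2 * E ^ 4, by ring⟩
        exact (Int.even_pow' two_ne_zero).1 this
      obtain ⟨w, rfl⟩ := hn2
      have hw : w ^ 2 = E ^ 4 + E ^ 2 * l ^ 2 + 16 * l ^ 4 := by linarith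
      rcases Int.even_or_odd l with hl | hl
      · refine noA _ le_rfl hE hl (by rintro rfl; simp at hM0) ?_ (by omega) hw
        apply gcd_one_of_prime
        intro p hp h1 h2
        exact no_prime_of_gcd_one hmE p hp (dvd_add h2 h2) h1
      · exact odd_odd_false hE hl hw
    · have := noB hm hE hmE (by omega) hn
      linarith
  · exfalso
    rcases Int.even_or_odd E with hE | hE
    · exact noA _ le_rfl hM hE hE0 hc hN h
    · exact odd_odd_false hM hE h

lemma rat_quartic {t w : ℚ} (h : w ^ 2 = t ^ 4 + t ^ 2 + 16) : t = 0 ∨ t ^ 2 = 4 := by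
  rcases eq_or_ne t 0 with h0 | h0
  · exact Or.inl h0
  right
  have hd : (t.den : ℚ) ≠ 0 := by exact_mod_cast t.den_nz
  have ht : t = (t.num : ℚ) / t.den := (Rat.num_div_den t).symm
  have hsq : IsSquare (((t.num ^ 4 + t.num ^ 2 * (t.den : ℤ) ^ 2 + 16 * (t.den : ℤ) ^ 4 : ℤ)) : ℚ) := by
    refine ⟨w * t.den ^ 2, ?_⟩
    have e : (t.num : ℚ) = t * t.den := (Rat.mul_den_eq_num t).symm
    push_cast
    rw [e]
    linear_combination (-(t.den : ℚ) ^ 4) * h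
  rw [Rat.isSquare_intCast_iff] at hsq
  obtain ⟨N, hN⟩ := hsq
  have hnum : t.num ≠ 0 := Rat.num_ne_zero.2 h0
  have hden : (t.den : ℤ) ≠ 0 := by exact_mod_cast t.den_nz
  have hN0 : N ≠ 0 := by
    rintro rfl
    have : 0 < t.num ^ 4 := by positivity
    have : 0 ≤ t.num ^ 2 * (t.den : ℤ) ^ 2 := by positivity
    have : 0 ≤ (t.den : ℤ) ^ 4 := by positivity
    omega
  have := int_quartic (N := |N|) hnum hden (by simpa [Int.gcd] using t.reduced) (abs_pos.2 hN0)
    (by rw [sq_abs, hN]; ring)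
  have hq : (t.num : ℚ) ^ 2 = 4 * (t.den : ℚ) ^ 2 := by exact_mod_cast this
  rw [ht, div_pow, hq]
  field_simp

lemma x_cases {x y : ℚ} (h : y ^ 2 + x * y = x ^ 3 - 4 * x - 1) :
    x = 2 ∨ x = -2 ∨ x = -1 / 4 ∨ x = -1 ∨ x = 5 := by
  by_cases hu : 4 * x + 1 = 0
  · right; right; left; linarith
  -- `t = Y / (2 u)` with `u = 4 x + 1`, `Y = 4 (2 y + x)`
  have ht : ∃ t : ℚ, t * (4 * x + 1) = 2 * (2 * y + x) := 
    ⟨2 * (2 * y + x) / (4 * x + 1), div_mul_cancel₀ _ hu⟩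
  obtain ⟨t, ht⟩ := ht
  have h2 : t ^ 2 * (4 * x + 1) = 4 * (x ^ 2 - 4) := by
    apply mul_right_cancel₀ hu
    linear_combination (t * (4 * x + 1) + 2 * (2 * y + x)) * ht + 16 * h
  have hq : ((4 * x + 1 - (1 + 2 * t ^ 2)) / 2) ^ 2 = t ^ 4 + t ^ 2 + 16 := by
    linear_combination (-1) * h2
  rcases rat_quartic hq with h0 | h4
  · rw [h0] at h2
    have : (x - 2) * (x + 2) = 0 := by linarith
    rcases mul_eq_zero.1 this with h | h
    · left; linarith
    · right; left; linarith
  · rw [h4] at h2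
    have : (x + 1) * (x - 5) = 0 := by linarith
    rcases mul_eq_zero.1 this with h | h
    · right; right; right; left; linarith
    · right; right; right; right; linarith

namespace X021Aux
open WeierstrassCurve

lemma nons {x y : ℚ} (h : y ^ 2 + x * y = x ^ 3 - 4 * x - 1) (h' : 2 * y + x ≠ 0 ∨ y ≠ 3 * x ^ 2 - 4) :
    X021.toAffine.Nonsingular x y := by
  rw [Affine.nonsingular_iff, Affine.equation_iff]
  simp only [X021]
  refine ⟨by linear_combination h, ?_⟩
  rcases h' with h' | h'
  · right; intro hh; apply h'; linear_combination hh
  · left; intro hh; apply h'; linear_combination hh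

abbrev mk (x y : ℚ) (h : y ^ 2 + x * y = x ^ 3 - 4 * x - 1)
    (h' : 2 * y + x ≠ 0 ∨ y ≠ 3 * x ^ 2 - 4) : X021.toAffine.Point := .some x y (nons h h')

def T4 : X021.toAffine.Point := mk (-1) 2 (by norm_num) (by norm_num)
def T4' : X021.toAffine.Point := mk (-1) (-1) (by norm_num) (by norm_num)
def D : X021.toAffine.Point := mk 2 (-1) (by norm_num) (by norm_num)
def T2 : X021.toAffine.Point := mk (-2) 1 (by norm_num) (by norm_num)
def R : X021.toAffine.Point := mk (-1 / 4) (1 / 8) (by norm_num) (by norm_num)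
def S : X021.toAffine.Point := mk 5 (-13) (by norm_num) (by norm_num)
def S' : X021.toAffine.Point := mk 5 8 (by norm_num) (by norm_num)

lemma T4_add_T4 : T4 + T4 = D := by
  unfold T4 D mk
  rw [Affine.Point.add_some (by norm_num [Affine.negY, X021])]
  simp only [Affine.Point.some.injEq]
  norm_num [Affine.addX, Affine.addY, Affine.negAddY, Affine.negY, Affine.slope, X021]

lemma D_add_T4 : D + T4 = T4' := by
  unfold T4 D T4' mk
  rw [Affine.Point.add_some (by norm_num [Affine.negY, X021])]
  simp only [Affine.Point.some.injEq]
  norm_num [Affine.addX, Affine.addY, Affine.negAddY, Affine.negY, Affine.slope, X021]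

lemma D_add_D : D + D = 0 := by
  unfold D mk
  exact Affine.Point.add_of_Y_eq rfl (by norm_num [Affine.negY, X021])

lemma T2_add_T2 : T2 + T2 = 0 := by
  unfold T2 mk
  exact Affine.Point.add_of_Y_eq rfl (by norm_num [Affine.negY, X021])

lemma T2_add_T4 : T2 + T4 = S := by
  unfold T2 T4 S mk
  rw [Affine.Point.add_some (by norm_num [Affine.negY, X021])]
  simp only [Affine.Point.some.injEq]
  norm_num [Affine.addX, Affine.addY, Affine.negAddY, Affine.negY, Affine.slope, X021]

lemma T2_add_D : T2 + D = R := by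
  unfold T2 D R mk
  rw [Affine.Point.add_some (by norm_num [Affine.negY, X021])]
  simp only [Affine.Point.some.injEq]
  norm_num [Affine.addX, Affine.addY, Affine.negAddY, Affine.negY, Affine.slope, X021]

lemma T2_add_T4' : T2 + T4' = S' := by
  unfold T2 T4' S' mk
  rw [Affine.Point.add_some (by norm_num [Affine.negY, X021])]
  simp only [Affine.Point.some.injEq]
  norm_num [Affine.addX, Affine.addY, Affine.negAddY, Affine.negY, Affine.slope, X021]

lemma two_T4 : (2 : ℤ) • T4 = D := by rw [two_zsmul, T4_add_T4]
lemma three_T4 : (3 : ℤ) • T4 = T4' := by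
  rw [show (3 : ℤ) = 2 + 1 by norm_num, add_zsmul, two_T4, one_zsmul, D_add_T4]
lemma four_T4 : (4 : ℤ) • T4 = 0 := by
  rw [show (4 : ℤ) = 2 + 2 by norm_num, add_zsmul, two_T4, D_add_D]
lemma two_T2 : (2 : ℤ) • T2 = 0 := by rw [two_zsmul, T2_add_T2]

noncomputable def f2 : ZMod 2 →+ X021.toAffine.Point :=
  ZMod.lift 2 ⟨zmultiplesHom _ T2, by simpa using two_T2⟩
noncomputable def f4 : ZMod 4 →+ X021.toAffine.Point :=
  ZMod.lift 4 ⟨zmultiplesHom _ T4, by simpa using four_T4⟩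

lemma f2_int (n : ℤ) : f2 (n : ZMod 2) = n • T2 := by simp [f2]
lemma f4_int (n : ℤ) : f4 (n : ZMod 4) = n • T4 := by simp [f4]

noncomputable def F : ZMod 2 × ZMod 4 →+ X021.toAffine.Point := f2.coprod f4

lemma F_int (a b : ℤ) : F ((a : ZMod 2), (b : ZMod 4)) = a • T2 + b • T4 := by
  simp only [F, AddMonoidHom.coprod_apply, f2_int, f4_int]

lemma F01 : F (0, 1) = T4 := by simpa using F_int 0 1
lemma F02 : F (0, 2) = D := by simpa [two_T4] using F_int 0 2
lemma F03 : F (0, 3) = T4' := by simpa [three_T4] using F_int 0 3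
lemma F10 : F (1, 0) = T2 := by simpa using F_int 1 0
lemma F11 : F (1, 1) = S := by simpa [T2_add_T4] using F_int 1 1
lemma F12 : F (1, 2) = R := by simpa [two_T4, T2_add_D] using F_int 1 2
lemma F13 : F (1, 3) = S' := by simpa [three_T4, T2_add_T4'] using F_int 1 3

lemma F_inj : Function.Injective F := by
  rw [injective_iff_map_eq_zero]
  have key : ∀ a : ZMod 2 × ZMod 4, a = (0, 0) ∨ a = (0, 1) ∨ a = (0, 2) ∨ a = (0, 3) ∨
    a = (1, 0) ∨ a = (1, 1) ∨ a = (1, 2) ∨ a = (1, 3) := by decide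
  intro a ha
  rcases key a with rfl | rfl | rfl | rfl | rfl | rfl | rfl | rfl
  · rfl
  · rw [F01] at ha; exact absurd ha (Affine.Point.some_ne_zero _)
  · rw [F02] at ha; exact absurd ha (Affine.Point.some_ne_zero _)
  · rw [F03] at ha; exact absurd ha (Affine.Point.some_ne_zero _)
  · rw [F10] at ha; exact absurd ha (Affine.Point.some_ne_zero _)
  · rw [F11] at ha; exact absurd ha (Affine.Point.some_ne_zero _)
  · rw [F12] at ha; exact absurd ha (Affine.Point.some_ne_zero _)
  · rw [F13] at ha; exact absurd ha (Affine.Point.some_ne_zero _)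

lemma F_surj : Function.Surjective F := by
  intro P
  rcases P with _ | ⟨x, y, h⟩
  · exact ⟨0, map_zero F⟩
  have he : y ^ 2 + x * y = x ^ 3 - 4 * x - 1 := by
    have := (Affine.equation_iff _ _).1 h.1
    simp only [X021] at this
    linear_combination this
  have fin : ∀ (a : ZMod 2 × ZMod 4) (x' y' : ℚ) (h' : X021.toAffine.Nonsingular x' y'),
      F a = .some x' y' h' → x = x' → y = y' → ∃ a, F a = .some x y h := by
    rintro a x' y' h' hF rfl rfl
    exact ⟨a, hF⟩
  rcases x_cases he with hx | hx | hx | hx | hx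
  · refine fin _ _ _ _ F02 hx ?_
    subst hx
    have : (y + 1) ^ 2 = 0 := by linear_combination he
    linarith [pow_eq_zero_iff (two_ne_zero) |>.1 this]
  · refine fin _ _ _ _ F10 hx ?_
    subst hx
    have : (y - 1) ^ 2 = 0 := by linear_combination he
    linarith [pow_eq_zero_iff (two_ne_zero) |>.1 this]
  · refine fin _ _ _ _ F12 hx ?_
    subst hx
    have : (y - 1 / 8) ^ 2 = 0 := by linear_combination he
    linarith [pow_eq_zero_iff (two_ne_zero) |>.1 this]
  · have : (y - 2) * (y + 1) = 0 := by subst hx; linear_combination he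
    rcases mul_eq_zero.1 this with hy | hy
    · exact fin _ _ _ _ F01 hx (by linarith)
    · exact fin _ _ _ _ F03 hx (by linarith)
  · have : (y - 8) * (y + 13) = 0 := by subst hx; linear_combination he
    rcases mul_eq_zero.1 this with hy | hy
    · exact fin _ _ _ _ F13 hx (by linarith)
    · exact fin _ _ _ _ F11 hx (by linarith)

end X021Aux

/-- The Mordell–Weil group `X₀(21)(ℚ)` is isomorphic to `ℤ/2ℤ × ℤ/4ℤ`. -/
theorem mordellWeil_X021_rat :
    Nonempty (X021.toAffine.Point ≃+ (ZMod 2 × ZMod 4)) :=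
  ⟨(AddEquiv.ofBijective X021Aux.F ⟨X021Aux.F_inj, X021Aux.F_surj⟩).symm⟩
end
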